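/- arXiv:2206.11412 — 6 statements merged into one kernel-verified Lean document; each statement's English description precedes it below -/
import Mathlib

section
/- Skolem–Mahler–Lech theorem: Let u : ℕ → ℤ be an integer linear recurrence sequence, i.e., there exist d ≥ 1 and integers c₁, …, c_d with c_d ≠ 0 such that u(n+d) = c₁·u(n+d−1) + ⋯ + c_{d−1}·u(n+1) + c_d·u(n) for all n ∈ ℕ. Then the zero set {n ∈ ℕ : u(n) = 0} is semilinear: there exist a finite set F ⊆ ℕ and finitely many pairs (a₁,b₁), …, (a_k,b_k) ∈ ℕ × ℕ with each bᵢ ≥ 1 such that {n ∈ ℕ : u(n) = 0} = F ∪ ⋃_{i=1}^{k} {aᵢ + bᵢ·m : m ∈ ℕ}. -/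
open Polynomial in
lemma sml_analytic (p : ℕ) [hp : Fact p.Prime] (v : ℕ → ℤ) (w : ℕ → ℤ)
    (hv : ∀ n, v n = ∑ k ∈ Finset.range (n + 1), (n.choose k : ℤ) * ((p : ℤ) ^ 3) ^ k * w k) :
    ∃ f : ℚ_[p] → ℚ_[p], (∀ z, ‖z‖ ≤ 1 → AnalyticAt ℚ_[p] f z) ∧ ∀ n : ℕ, f n = v n := by
  have hp1 : (1 : ℝ) < p := by exact_mod_cast hp.out.one_lt
  have hp0 : (p : ℝ) ≠ 0 := by positivity
  set r : ℝ := (p : ℝ)⁻¹ with hr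
  have hr0 : 0 ≤ r := by positivity
  have hr1 : r < 1 := inv_lt_one_of_one_lt₀ hp1
  let e : ℕ → ℚ_[p] := fun k => (w k : ℚ_[p]) * ((p : ℚ_[p]) ^ 3) ^ k / (k.factorial : ℚ_[p])
  let s : ℕ → ℕ → ℤ := fun k j => (descPochhammer ℤ k).coeff j
  have hfac : ∀ k : ℕ, r ^ k ≤ ‖(k.factorial : ℚ_[p])‖ := by
    intro k
    rw [Padic.norm_eq_zpow_neg_valuation (by exact_mod_cast k.factorial_ne_zero),
      Padic.valuation_natCast, hr, inv_pow, ← zpow_natCast, ← zpow_neg]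
    apply zpow_le_zpow_right₀ hp1.le
    have := padicValNat_factorial_le p k
    omega
  have he : ∀ k, ‖e k‖ ≤ r ^ k * r ^ k := by
    intro k
    simp only [e]
    rw [norm_div, norm_mul, norm_pow, norm_pow, Padic.norm_p, ← hr]
    have h0 : 0 < r ^ k := by positivity
    rw [div_le_iff₀ (lt_of_lt_of_le h0 (hfac k))]
    calc ‖(w k : ℚ_[p])‖ * (r ^ 3) ^ k ≤ 1 * (r ^ 3) ^ k := by
          gcongr; exact Padic.norm_int_le_one _
      _ = r ^ k * r ^ k * r ^ k := by ring
      _ ≤ _ := by gcongr; exact hfac k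
  have hes : ∀ k j, ‖e k * (s k j : ℚ_[p])‖ ≤ r ^ k * r ^ j := by
    intro k j
    by_cases hjk : j ≤ k
    · rw [norm_mul]
      calc _ ≤ (r ^ k * r ^ k) * 1 := by
            gcongr
            · exact he k
            · exact Padic.norm_int_le_one _
        _ ≤ _ := by
            rw [mul_one]
            gcongr 1
            exact pow_le_pow_of_le_one hr0 hr1.le hjk
    · have : s k j = 0 := by
        apply coeff_eq_zero_of_natDegree_lt
        rw [descPochhammer_natDegree]; omega
      rw [this]; simp; positivity
  have hgeo : Summable (fun k : ℕ => r ^ k) := summable_geometric_of_lt_one hr0 hr1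
  let a : ℕ → ℚ_[p] := fun j => ∑' k, e k * (s k j : ℚ_[p])
  have ha : ∀ j, ‖a j‖ ≤ (∑' k : ℕ, r ^ k) * r ^ j := by
    intro j
    exact tsum_of_norm_bounded (hgeo.hasSum.mul_right _) (fun k => hes k j)
  let P := FormalMultilinearSeries.ofScalars ℚ_[p] a
  have hrad : ((p : NNReal) : ENNReal) ≤ P.radius := by
    apply P.le_radius_of_bound (∑' k : ℕ, r ^ k)
    intro n
    rw [FormalMultilinearSeries.ofScalars_norm]
    calc _ ≤ ((∑' k : ℕ, r ^ k) * r ^ n) * (p : ℝ) ^ n := by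
          gcongr
          · exact ha n
          · simp
      _ = _ := by rw [mul_assoc, ← mul_pow, hr, inv_mul_cancel₀ hp0, one_pow, mul_one]
  have hppos : (0 : ENNReal) < ((p : NNReal) : ENNReal) := by
    exact_mod_cast hp.out.pos
  refine ⟨P.sum, ?_, ?_⟩
  · intro z hz
    apply (P.hasFPowerSeriesOnBall (lt_of_lt_of_le hppos hrad)).analyticAt_of_mem
    refine Metric.eball_subset_eball hrad ?_
    rw [Metric.mem_eball, edist_zero_right, ← ofReal_norm]
    refine lt_of_le_of_lt (ENNReal.ofReal_le_ofReal hz) ?_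
    simp
    exact_mod_cast hp.out.one_lt
  · intro n
    have h1 : P.sum (n : ℚ_[p]) = ∑' j, ∑' k, e k * (s k j : ℚ_[p]) * (n : ℚ_[p]) ^ j := by
      have := FormalMultilinearSeries.ofScalars_sum_eq a (n : ℚ_[p])
      unfold FormalMultilinearSeries.ofScalarsSum at this
      rw [this]
      congr 1; ext j
      rw [smul_eq_mul, tsum_mul_right]
    rw [h1]
    have hsum : Summable (Function.uncurry fun (j k : ℕ) => e k * (s k j : ℚ_[p]) * (n : ℚ_[p]) ^ j) := by
      refine Summable.of_norm_bounded (g := fun x : ℕ × ℕ => r ^ x.1 * r ^ x.2)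
        (hgeo.mul_of_nonneg hgeo (fun _ => by positivity) (fun _ => by positivity)) ?_
      rintro ⟨j, k⟩
      simp only [Function.uncurry_apply_pair]
      rw [norm_mul, norm_pow]
      calc _ ≤ (r ^ k * r ^ j) * 1 ^ j := by
            gcongr
            · exact hes k j
            · exact_mod_cast Padic.norm_int_le_one (n : ℤ)
        _ = _ := by ring
    rw [← hsum.tsum_comm]
    have h2 : ∀ k, ∑' j, e k * (s k j : ℚ_[p]) * (n : ℚ_[p]) ^ j
        = (n.choose k : ℚ_[p]) * ((p : ℚ_[p]) ^ 3) ^ k * w k := by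
      intro k
      have h3 : (∑ j ∈ Finset.range (k + 1), (s k j : ℚ_[p]) * (n : ℚ_[p]) ^ j)
          = (n.descFactorial k : ℚ_[p]) := by
        have h4 := descPochhammer_eval_eq_descFactorial ℤ n k
        rw [eval_eq_sum_range, descPochhammer_natDegree] at h4
        exact_mod_cast h4
      rw [tsum_eq_sum (s := Finset.range (k + 1))]
      · simp_rw [mul_assoc]
        rw [← Finset.mul_sum, h3, Nat.descFactorial_eq_factorial_mul_choose]
        have : (k.factorial : ℚ_[p]) ≠ 0 := by exact_mod_cast k.factorial_ne_zero
        simp only [e]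
        push_cast
        field_simp
      · intro j hj
        have : s k j = 0 := by
          apply coeff_eq_zero_of_natDegree_lt
          rw [descPochhammer_natDegree]; simpa using hj
        simp [this]
    simp_rw [h2]
    rw [tsum_eq_sum (s := Finset.range (n + 1)), hv]
    · push_cast; rfl
    · intro k hk
      rw [Nat.choose_eq_zero_of_lt (by simpa using hk)]
      simp
open Filter Topology in
lemma sml_compact (p : ℕ) [hp : Fact p.Prime] (v : ℕ → ℤ) (f : ℚ_[p] → ℚ_[p])
    (hf : ∀ z, ‖z‖ ≤ 1 → AnalyticAt ℚ_[p] f z) (hfv : ∀ n : ℕ, f n = v n) :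
    ∃ m : ℕ, ∀ s : ℕ, (∀ t, v (s + p ^ m * t) = 0) ∨ {t | v (s + p ^ m * t) = 0}.Finite := by
  by_contra! hcon
  choose s hs1 hs2 using hcon
  obtain ⟨z, φ, hφ, hz⟩ := CompactSpace.tendsto_subseq (fun m => (s m : ℤ_[p]))
  have hp1 : (1 : ℝ) < p := by exact_mod_cast hp.out.one_lt
  have hpow : Tendsto (fun i : ℕ => ((p : ℝ)⁻¹) ^ φ i) atTop (𝓝 0) :=
    (tendsto_pow_atTop_nhds_zero_of_lt_one (by positivity)
      (inv_lt_one_of_one_lt₀ hp1)).comp hφ.tendsto_atTop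
  have key : ∀ ε > 0, ∃ m, ∀ t : ℕ, dist ((s m + p ^ m * t : ℕ) : ℚ_[p]) (z : ℚ_[p]) < ε := by
    intro ε hε
    have h1 := (Metric.tendsto_nhds.1 hz (ε / 2) (half_pos hε))
    have h2 := hpow.eventually (gt_mem_nhds (half_pos hε))
    obtain ⟨i, h1, h2⟩ := (h1.and h2).exists
    refine ⟨φ i, fun t => ?_⟩
    have h3 : dist ((s (φ i) : ℚ_[p])) (z : ℚ_[p]) < ε / 2 := by
      simpa [dist_eq_norm, PadicInt.norm_def] using h1
    have h4 : dist ((s (φ i) + p ^ φ i * t : ℕ) : ℚ_[p]) (s (φ i) : ℚ_[p]) ≤ ((p : ℝ)⁻¹) ^ φ i := by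
      rw [dist_eq_norm]
      push_cast
      rw [add_sub_cancel_left, norm_mul, norm_pow, Padic.norm_p]
      have : ‖(t : ℚ_[p])‖ ≤ 1 := by exact_mod_cast Padic.norm_int_le_one (t : ℤ)
      exact mul_le_of_le_one_right (by positivity) this
    linarith [dist_triangle ((s (φ i) + p ^ φ i * t : ℕ) : ℚ_[p]) (s (φ i) : ℚ_[p]) (z : ℚ_[p])]
  rcases (hf z z.2).eventually_eq_zero_or_eventually_ne_zero with h | h
  · obtain ⟨ε, hε, hb⟩ := Metric.eventually_nhds_iff.1 h
    obtain ⟨m, hm⟩ := key ε hε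
    obtain ⟨t, ht⟩ := hs1 m
    apply ht
    have := hb (hm t)
    rw [hfv] at this
    exact_mod_cast this
  · rw [eventually_nhdsWithin_iff] at h
    obtain ⟨ε, hε, hb⟩ := Metric.eventually_nhds_iff.1 h
    obtain ⟨m, hm⟩ := key ε hε
    apply hs2 m
    apply Set.Subsingleton.finite
    have hz : ∀ t, v (s m + p ^ m * t) = 0 → ((s m + p ^ m * t : ℕ) : ℚ_[p]) = z := by
      intro t ht
      by_contra hne
      apply hb (hm t) hne
      rw [hfv, ht]; simp
    intro t ht t' ht'
    have h5 := (hz t ht).trans (hz t' ht').symm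
    have h6 : s m + p ^ m * t = s m + p ^ m * t' := by exact_mod_cast h5
    exact Nat.eq_of_mul_eq_mul_left (pow_pos hp.out.pos m) (Nat.add_left_cancel h6)
open Polynomial in
lemma sml_poly (q : ℕ) [NeZero q] (P : ℤ[X]) (hP : P.Monic) (hc : IsUnit ((P.coeff 0 : ℤ) : ZMod q)) :
    ∃ N : ℕ, 0 < N ∧ ∃ B G : ℤ[X], X ^ N = 1 + C (q : ℤ) * B + P * G := by
  let Q : (ZMod q)[X] := P.map (Int.castRingHom (ZMod q))
  have hQ : Q.Monic := hP.map _
  have : Module.Finite (ZMod q) (AdjoinRoot Q) := hQ.finite_adjoinRoot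
  have : Finite (AdjoinRoot Q) := Module.finite_of_finite (ZMod q)
  have hu : IsUnit (AdjoinRoot.root Q) := by
    have h1 : AdjoinRoot.root Q * AdjoinRoot.mk Q Q.divX + AdjoinRoot.of Q (Q.coeff 0) = 0 := by
      have := congrArg (AdjoinRoot.mk Q) (Polynomial.X_mul_divX_add Q)
      rw [AdjoinRoot.mk_self, map_add, map_mul, AdjoinRoot.mk_X, AdjoinRoot.mk_C] at this
      exact this
    have h2 : IsUnit (AdjoinRoot.of Q (Q.coeff 0)) := by
      apply IsUnit.map
      simpa [Q] using hc
    apply isUnit_of_mul_isUnit_left (y := AdjoinRoot.mk Q Q.divX)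
    rw [eq_neg_of_add_eq_zero_left h1]
    exact h2.neg
  obtain ⟨x, hx⟩ := hu
  refine ⟨orderOf x, orderOf_pos x, ?_⟩
  set N := orderOf x
  have h3 : AdjoinRoot.mk Q (X ^ N - 1) = 0 := by
    have := pow_orderOf_eq_one x
    have := congrArg Units.val this
    simp only [Units.val_pow_eq_pow_val, hx, Units.val_one] at this
    simp [N, this]
  rw [AdjoinRoot.mk_eq_zero, ← modByMonic_eq_zero_iff_dvd hQ] at h3
  have h4 : ((X ^ N - 1 : ℤ[X]) %ₘ P).map (Int.castRingHom (ZMod q)) = 0 := by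
    rw [map_modByMonic _ hP]
    simpa using h3
  have h5 : C (q : ℤ) ∣ ((X ^ N - 1 : ℤ[X]) %ₘ P) := by
    rw [C_dvd_iff_dvd_coeff]
    intro i
    have := congrArg (fun g => coeff g i) h4
    simp only [coeff_map, coeff_zero] at this
    exact (ZMod.intCast_zmod_eq_zero_iff_dvd _ _).1 this
  obtain ⟨B, hB⟩ := h5
  refine ⟨B, (X ^ N - 1 : ℤ[X]) /ₘ P, ?_⟩
  have := modByMonic_add_div (X ^ N - 1 : ℤ[X]) P
  rw [← hB, add_assoc, this]; ring

/-- shift operator -/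
def smlShift : Module.End ℤ (ℕ → ℤ) where
  toFun u := fun n => u (n + 1)
  map_add' _ _ := rfl
  map_smul' _ _ := rfl

lemma smlShift_pow (k : ℕ) (u : ℕ → ℤ) (n : ℕ) : (smlShift ^ k) u n = u (n + k) := by
  induction k generalizing u n with
  | zero => rfl
  | succ k ih =>
    rw [pow_succ, Module.End.mul_apply, ih]; rfl

open Polynomial in
lemma sml_expand (q N : ℕ) (u : ℕ → ℤ) (P B G : ℤ[X]) (hu : aeval smlShift P u = 0)
    (h : X ^ N = 1 + C (q : ℤ) * B + P * G) (r n : ℕ) :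
    u (r + N * n) = ∑ k ∈ Finset.range (n + 1),
      (n.choose k : ℤ) * (q : ℤ) ^ k * (aeval smlShift (B ^ k) u r) := by
  have h1 : ∃ H, (X ^ N : ℤ[X]) ^ n = (C (q : ℤ) * B + 1) ^ n + H * P := by
    have : P ∣ (X ^ N : ℤ[X]) ^ n - (C (q : ℤ) * B + 1) ^ n :=
      Dvd.dvd.trans ⟨G, by rw [h]; ring⟩ (sub_dvd_pow_sub_pow _ _ n)
    obtain ⟨H, hH⟩ := this
    exact ⟨H, by rw [mul_comm H, ← hH]; ring⟩
  obtain ⟨H, hH⟩ := h1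
  have h0 : (C (q : ℤ) * B + 1) ^ n = ∑ k ∈ Finset.range (n + 1),
      C ((n.choose k : ℤ) * (q : ℤ) ^ k) * B ^ k := by
    rw [add_pow]
    refine Finset.sum_congr rfl fun k _ => ?_
    simp only [map_mul, map_pow, map_natCast, one_pow, mul_one, mul_pow]
    ring
  have h2 := congrArg (fun g => aeval smlShift g u r) hH
  rw [h0] at h2
  simp only [map_add, LinearMap.add_apply, map_sum, LinearMap.sum_apply, Finset.sum_apply,
    map_mul (aeval smlShift) H, Module.End.mul_apply, hu, map_zero,
    add_zero, ← pow_mul, aeval_X_pow, smlShift_pow, Pi.add_apply, ← smul_eq_C_mul, map_smul,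
    LinearMap.smul_apply, Pi.smul_apply, smul_eq_mul, Pi.zero_apply] at h2
  exact h2
lemma sml_assemble (u : ℕ → ℤ) (M : ℕ) (hM : 0 < M)
    (h : ∀ r < M, (∀ t, u (r + M * t) = 0) ∨ {t | u (r + M * t) = 0}.Finite) :
    ∃ (F : Finset ℕ) (k : ℕ) (a b : Fin k → ℕ),
      (∀ i, 1 ≤ b i) ∧
      {n : ℕ | u n = 0} =
        ↑F ∪ ⋃ i : Fin k, {n : ℕ | ∃ m : ℕ, n = a i + b i * m} := by
  classical
  let T := (Finset.range M).filter (fun r => ∀ t, u (r + M * t) = 0)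
  let S : Set ℕ := {n | u n = 0 ∧ n % M ∉ T}
  have hS : S.Finite := by
    have : S ⊆ ⋃ r ∈ (Finset.range M \ T : Finset ℕ), (fun t => r + M * t) '' {t | u (r + M * t) = 0} := by
      intro n hn
      simp only [Set.mem_iUnion]
      refine ⟨n % M, ?_, n / M, ?_, Nat.mod_add_div n M⟩
      · simp [Nat.mod_lt _ hM, hn.2]
      · simpa [Nat.mod_add_div] using hn.1
    refine Set.Finite.subset (Set.Finite.biUnion (Finset.finite_toSet _) ?_) this
    intro r hr
    simp only [Finset.coe_sdiff, Set.mem_sdiff, Finset.mem_coe, Finset.mem_range, T,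
      Finset.mem_filter, not_and] at hr
    exact ((h r hr.1).resolve_left (hr.2 hr.1)).image _
  refine ⟨hS.toFinset, T.card, fun i => (T.equivFin.symm i : ℕ), fun _ => M, fun _ => hM, ?_⟩
  ext n
  simp only [Set.mem_ofPred_eq, Set.mem_union, Set.Finite.coe_toFinset, Set.mem_iUnion]
  constructor
  · intro hn
    by_cases hT : n % M ∈ T
    · right
      exact ⟨T.equivFin ⟨n % M, hT⟩, n / M, by simp [Nat.mod_add_div]⟩
    · left; exact ⟨hn, hT⟩
  · rintro (hn | ⟨i, m, rfl⟩)
    · exact hn.1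
    · exact (Finset.mem_filter.1 (T.equivFin.symm i).2).2 m
open Polynomial in
theorem skolem_mahler_lech (u : ℕ → ℤ)
    (hLRS : ∃ d : ℕ, ∃ c : Fin (d + 1) → ℤ, c 0 ≠ 0 ∧
      ∀ n : ℕ, u (n + (d + 1)) = ∑ j : Fin (d + 1), c j * u (n + (j : ℕ))) :
    ∃ (F : Finset ℕ) (k : ℕ) (a b : Fin k → ℕ),
      (∀ i, 1 ≤ b i) ∧
      {n : ℕ | u n = 0} =
        ↑F ∪ ⋃ i : Fin k, {n : ℕ | ∃ m : ℕ, n = a i + b i * m} := by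
  obtain ⟨d, c, hc, hrec⟩ := hLRS
  obtain ⟨p, hpl, hp⟩ := Nat.exists_infinite_primes ((c 0).natAbs + 1)
  have hpf : Fact p.Prime := ⟨hp⟩
  let P : ℤ[X] := X ^ (d + 1) - ∑ j : Fin (d + 1), C (c j) * X ^ (j : ℕ)
  have hP : P.Monic := monic_X_pow_sub (Polynomial.degree_sum_fin_lt c)
  have hP0 : P.coeff 0 = - c 0 := by
    simp only [P, coeff_sub, finsetSum_coeff, coeff_C_mul, coeff_X_pow]
    rw [Finset.sum_eq_single 0]
    · simp
    · intro b _ hb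
      have : 0 ≠ (b : ℕ) := fun h => hb (Fin.ext h.symm)
      simp [this]
    · simp
  have hPu : aeval smlShift P u = 0 := by
    ext n
    simp only [P, map_sub, map_sum, ← smul_eq_C_mul, map_smul, aeval_X_pow, LinearMap.sub_apply,
      LinearMap.sum_apply, LinearMap.smul_apply, Pi.sub_apply, Finset.sum_apply, Pi.smul_apply,
      smlShift_pow, smul_eq_mul, hrec, sub_self, Pi.zero_apply]
  have hq : NeZero (p ^ 3) := ⟨pow_ne_zero _ hp.ne_zero⟩
  have hunit : IsUnit ((P.coeff 0 : ℤ) : ZMod (p ^ 3)) := by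
    rw [hP0, Int.cast_neg, IsUnit.neg_iff]
    rw [ZMod.coe_int_isUnit_iff_isCoprime]
    rw [Nat.cast_pow]
    apply IsCoprime.pow_left
    rw [Int.isCoprime_iff_gcd_eq_one, Int.gcd, Int.natAbs_natCast, ← Nat.coprime_iff_gcd_eq_one,
      hp.coprime_iff_not_dvd]
    intro hd
    have := Nat.le_of_dvd (Int.natAbs_pos.2 hc) hd
    omega
  obtain ⟨N, hN, B, G, hBG⟩ := sml_poly (p ^ 3) P hP hunit
  have hr : ∀ r : ℕ, ∃ m : ℕ, ∀ s : ℕ, (∀ t, u (r + N * (s + p ^ m * t)) = 0) ∨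
      {t | u (r + N * (s + p ^ m * t)) = 0}.Finite := by
    intro r
    obtain ⟨f, hf, hfv⟩ := sml_analytic p (fun n => u (r + N * n))
      (fun k => aeval smlShift (B ^ k) u r) (fun n => by
        have := sml_expand (p ^ 3) N u P B G hPu hBG r n
        push_cast at this
        exact this)
    exact sml_compact p _ f hf hfv
  choose m hm using hr
  let m' := (Finset.range N).sup m
  apply sml_assemble u (N * p ^ m') (by have := hp.pos; positivity)
  intro x _
  have hle : m (x % N) ≤ m' := Finset.le_sup (Finset.mem_range.2 (Nat.mod_lt _ hN))
  obtain ⟨e, he⟩ := Nat.exists_eq_add_of_le hle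
  have heq : ∀ t, x + N * p ^ m' * t = x % N + N * (x / N + p ^ m (x % N) * (p ^ e * t)) := by
    intro t
    conv_lhs => rw [← Nat.mod_add_div x N, he]
    ring
  simp only [heq]
  rcases hm (x % N) (x / N) with h | h
  · left; intro t; exact h _
  · right
    refine Set.Finite.preimage (f := fun t => p ^ e * t) ?_ h
    intro a _ b _ hab
    exact Nat.eq_of_mul_eq_mul_left (pow_pos hp.pos e) hab
end

section
/- Let d ≥ 1, let M be a real d × d matrix, x ∈ ℝ^d, and let H = {y ∈ ℝ^d : c · y ≥ b} be a closed halfspace (where c ∈ ℝ^d and b ∈ ℝ). Then the following are equivalent: (i) for every ε > 0 there exists an ε-pseudo-orbit ⟨x_n⟩ of x under M such that x_n ∈ H for all n ∈ ℕ; (ii) Mⁿx ∈ H for all n ∈ ℕ. -/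
/-- Deviation bound for pseudo-orbits at a fixed time. -/
lemma pseudo_dev {d : ℕ} (M : Matrix (Fin d) (Fin d) ℝ) (x : EuclideanSpace ℝ (Fin d)) (n : ℕ) :
    ∃ C : ℝ, 0 ≤ C ∧ ∀ ε : ℝ, 0 < ε → ∀ xs : ℕ → EuclideanSpace ℝ (Fin d), xs 0 = x →
      (∀ n : ℕ, ‖xs (n + 1) - (WithLp.equiv 2 (Fin d → ℝ)).symm (M.mulVec (xs n))‖ < ε) →
      ‖xs n - WithLp.toLp 2 ((M ^ n).mulVec x)‖ ≤ C * ε := by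
  induction n with
  | zero =>
    refine ⟨0, le_rfl, fun ε _ xs h0 _ => ?_⟩
    simp [h0]
  | succ n ih =>
    obtain ⟨C, hC, h⟩ := ih
    let T := Matrix.toEuclideanCLM (n := Fin d) (𝕜 := ℝ) M
    have hT : ∀ y : EuclideanSpace ℝ (Fin d), T y = WithLp.toLp 2 (M.mulVec y) := fun y => rfl
    refine ⟨1 + ‖T‖ * C, by positivity, fun ε hε xs h0 hs => ?_⟩
    have h1 := h ε hε xs h0 hs
    have h2 : ‖xs (n + 1) - T (xs n)‖ < ε := hs n
    have h3 : WithLp.toLp 2 ((M ^ (n + 1)).mulVec x)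
        = T (WithLp.toLp 2 ((M ^ n).mulVec x)) := by
      rw [hT, pow_succ', ← Matrix.mulVec_mulVec]
    have h4 : xs (n + 1) - WithLp.toLp 2 ((M ^ (n + 1)).mulVec x)
        = (xs (n + 1) - T (xs n)) + T (xs n - WithLp.toLp 2 ((M ^ n).mulVec x)) := by
      rw [h3, map_sub]; abel
    rw [h4]
    have h5 := T.le_opNorm (xs n - WithLp.toLp 2 ((M ^ n).mulVec x))
    have h6 := mul_le_mul_of_nonneg_left h1 (norm_nonneg T)
    have h7 := norm_add_le (xs (n + 1) - T (xs n)) (T (xs n - WithLp.toLp 2 ((M ^ n).mulVec x)))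
    linarith

lemma sum_eq_inner' {d : ℕ} (c y : EuclideanSpace ℝ (Fin d)) :
    ∑ i, c i * y i = inner ℝ c y := by
  simp [PiLp.inner_apply, mul_comm]

/-- For a closed halfspace `H = {y : c ⬝ y ≥ b}`, every `ε > 0` admits an
`ε`-pseudo-orbit of `x` under `M` remaining in `H` iff the genuine orbit of `x`
under `M` remains in `H`.  Here the norm is the Euclidean norm on `ℝ^d`. -/
theorem pseudo_orbits_in_halfspace_iff_orbit_in_halfspace
    (d : ℕ) (hd : 1 ≤ d)
    (M : Matrix (Fin d) (Fin d) ℝ) (x : EuclideanSpace ℝ (Fin d))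
    (c : EuclideanSpace ℝ (Fin d)) (b : ℝ) :
    (∀ ε : ℝ, 0 < ε → ∃ xs : ℕ → EuclideanSpace ℝ (Fin d),
        xs 0 = x ∧
        (∀ n : ℕ, ‖xs (n + 1) -
            (WithLp.equiv 2 (Fin d → ℝ)).symm (M.mulVec (xs n))‖ < ε) ∧
        (∀ n : ℕ, b ≤ ∑ i, c i * xs n i)) ↔
      (∀ n : ℕ, b ≤ ∑ i, c i * ((M ^ n).mulVec x) i) := by
  constructor
  · intro h n
    obtain ⟨C, hC, hdev⟩ := pseudo_dev M x n
    apply le_of_forall_pos_le_add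
    intro δ hδ
    have hK : 0 < ‖c‖ * C + 1 := by positivity
    obtain ⟨xs, h0, hs, hb⟩ := h (δ / (‖c‖ * C + 1)) (by positivity)
    have h1 := hdev _ (by positivity) xs h0 hs
    have h2 := hb n
    have e : ∑ i, c i * ((M ^ n).mulVec x) i = inner ℝ c (WithLp.toLp 2 ((M ^ n).mulVec x)) :=
      sum_eq_inner' c (WithLp.toLp 2 ((M ^ n).mulVec x))
    rw [sum_eq_inner'] at h2
    rw [e]
    have h3 := real_inner_le_norm c (xs n - WithLp.toLp 2 ((M ^ n).mulVec x))
    rw [inner_sub_right] at h3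
    have h4 := mul_le_mul_of_nonneg_left h1 (norm_nonneg c)
    have h5 : ‖c‖ * (C * (δ / (‖c‖ * C + 1))) ≤ δ := by
      rw [← mul_assoc, ← mul_div_assoc, div_le_iff₀ hK]
      nlinarith
    linarith
  · intro h ε hε
    refine ⟨fun n => WithLp.toLp 2 ((M ^ n).mulVec x), by simp, fun n => ?_, h⟩
    have : WithLp.toLp 2 ((M ^ (n + 1)).mulVec x)
        = (WithLp.equiv 2 (Fin d → ℝ)).symm (M.mulVec ((M ^ n).mulVec x)) := by
      rw [pow_succ', ← Matrix.mulVec_mulVec]; rfl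
    show ‖WithLp.toLp 2 ((M ^ (n + 1)).mulVec x)
      - (WithLp.equiv 2 (Fin d → ℝ)).symm (M.mulVec ((M ^ n).mulVec x))‖ < ε
    rw [this, sub_self, norm_zero]
    exact hε
end

section
/- Let d ≥ 2 and let P be a polynomial with integer coefficients in d − 1 variables Y₁, …, Y_{d−1}. Then the following are equivalent: (i) there exist pairwise distinct natural numbers m₁, …, m_{d−1} with P(m₁, …, m_{d−1}) = 0; (ii) there exist real numbers y₁, …, y_{d−1} with P(y₁, …, y_{d−1}) = 0 such that the set {n ∈ ℕ : (n − y₁)(n − y₂)⋯(n − y_{d−1}) = 0} has at least d − 1 elements. -/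
/-- Reduction from the distinct-naturals variant of Hilbert's tenth problem:
`P` has a root in pairwise distinct natural numbers iff `P` has a real root
`(y₁, …, y_{d−1})` such that `{n ∈ ℕ : (n − y₁)⋯(n − y_{d−1}) = 0}` has at least
`d − 1` elements. -/
theorem distinct_nat_root_iff (d : ℕ) (hd : 2 ≤ d)
    (P : MvPolynomial (Fin (d - 1)) ℤ) :
    (∃ m : Fin (d - 1) → ℕ, Function.Injective m ∧
        MvPolynomial.eval (fun i => (m i : ℤ)) P = 0) ↔
      (∃ y : Fin (d - 1) → ℝ, MvPolynomial.aeval y P = 0 ∧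
        ∃ s : Finset ℕ, d - 1 ≤ s.card ∧ ∀ n ∈ s, ∏ i, ((n : ℝ) - y i) = 0) := by
  have key : ∀ m : Fin (d - 1) → ℕ,
      MvPolynomial.aeval (fun i => (m i : ℝ)) P
        = ((MvPolynomial.eval (fun i => (m i : ℤ)) P : ℤ) : ℝ) := by
    intro m
    have h := MvPolynomial.aeval_algebraMap_apply (A := ℤ) ℝ (fun i => (m i : ℤ)) P
    simpa [MvPolynomial.aeval_eq_eval, Function.comp_def] using h
  constructor
  · rintro ⟨m, hm, h0⟩
    refine ⟨fun i => (m i : ℝ), ?_, Finset.univ.image m, ?_, ?_⟩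
    · rw [key, h0]; simp
    · rw [Finset.card_image_of_injective _ hm]; simp
    · intro n hn
      obtain ⟨i, -, rfl⟩ := Finset.mem_image.1 hn
      exact Finset.prod_eq_zero (Finset.mem_univ i) (sub_self _)
  · rintro ⟨y, h0, s, hs, hz⟩
    have h1 : ∀ n : s, ∃ i, ((n : ℕ) : ℝ) = y i := by
      intro n
      obtain ⟨i, -, hi⟩ := Finset.prod_eq_zero_iff.1 (hz n n.2)
      exact ⟨i, sub_eq_zero.1 hi⟩
    choose f hf using h1
    have finj : Function.Injective f := by
      intro a b hab
      have h2 : ((a : ℕ) : ℝ) = ((b : ℕ) : ℝ) := by rw [hf a, hf b, hab]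
      exact Subtype.ext (Nat.cast_injective h2)
    have hle := Fintype.card_le_of_injective f finj
    have fbij : Function.Bijective f := by
      rw [Fintype.bijective_iff_injective_and_card]
      refine ⟨finj, le_antisymm hle ?_⟩
      simpa using hs
    choose g hg using fbij.2
    have hy : y = fun i => (((g i : s) : ℕ) : ℝ) := by
      funext i
      rw [hf, hg]
    refine ⟨fun i => (g i : ℕ), ?_, ?_⟩
    · intro i j hij
      have h3 : g i = g j := Subtype.ext hij
      rw [← hg i, ← hg j, h3]
    · rw [hy, key] at h0
      exact_mod_cast h0
end

section
/- Let λ = c + d·i be a complex number with c² + d² = 1 (c, d real), let r ∈ ℝ, let M be the real 4 × 4 matrix with rows (c, −d, 1, 0), (d, c, 0, 1), (0, 0, c, −d), (0, 0, d, c), and let x = (1, 1, 1, 1) ∈ ℝ⁴. Define p(x₁, x₂, x₃, x₄) = (r/2)·(x₄ − x₃) − ((x₁ − x₃) / (Re(λ⁻¹)·x₃ − Im(λ⁻¹)·x₄))·(1 − (x₃ + x₄)/2). Then for every n ≥ 1 such that Re(λ^{n−1}) ≠ Im(λ^{n−1}), one has p(Mⁿx) = r·Im(λⁿ) − n·(1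 − Re(λⁿ)). -/
/-- For `λ = c + d·i` of modulus 1, `r ∈ ℝ`, with `M` and `x = (1,1,1,1)` as in
the Diophantine-hardness construction, and
`p(x₁,x₂,x₃,x₄) = (r/2)(x₄ − x₃) − ((x₁ − x₃)/(Re(λ⁻¹)x₃ − Im(λ⁻¹)x₄))(1 − (x₃+x₄)/2)`,
one has `p(Mⁿx) = r·Im(λⁿ) − n(1 − Re(λⁿ))` for `n ≥ 1` with
`Re(λ^{n−1}) ≠ Im(λ^{n−1})`. -/
theorem semialgebraic_target_formula (c d r : ℝ) (h : c ^ 2 + d ^ 2 = 1)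
    (l : ℂ) (hl : l = (c : ℂ) + (d : ℂ) * Complex.I)
    (M : Matrix (Fin 4) (Fin 4) ℝ)
    (hM : M = !![c, -d, 1, 0; d, c, 0, 1; 0, 0, c, -d; 0, 0, d, c])
    (x : Fin 4 → ℝ) (hx : x = ![1, 1, 1, 1])
    (p : ℝ → ℝ → ℝ → ℝ → ℝ)
    (hp : ∀ x₁ x₂ x₃ x₄ : ℝ, p x₁ x₂ x₃ x₄ =
      (r / 2) * (x₄ - x₃)
        - ((x₁ - x₃) / ((l⁻¹).re * x₃ - (l⁻¹).im * x₄)) * (1 - (x₃ + x₄) / 2))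
    (n : ℕ) (hn : 1 ≤ n)
    (hne : (l ^ (n - 1)).re ≠ (l ^ (n - 1)).im) :
    p ((M ^ n).mulVec x 0) ((M ^ n).mulVec x 1)
        ((M ^ n).mulVec x 2) ((M ^ n).mulVec x 3)
      = r * (l ^ n).im - (n : ℝ) * (1 - (l ^ n).re) := by
  obtain ⟨k, rfl⟩ : ∃ k, n = k + 1 := ⟨n - 1, by omega⟩
  simp only [Nat.add_sub_cancel] at hne
  have hre : l.re = c := by simp [hl]
  have him : l.im = d := by simp [hl]
  have key : ∀ k : ℕ, (M ^ (k + 1)).mulVec x =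
      ![((l ^ (k + 1)).re - (l ^ (k + 1)).im) + ((k : ℝ) + 1) * ((l ^ k).re - (l ^ k).im),
        ((l ^ (k + 1)).re + (l ^ (k + 1)).im) + ((k : ℝ) + 1) * ((l ^ k).re + (l ^ k).im),
        (l ^ (k + 1)).re - (l ^ (k + 1)).im,
        (l ^ (k + 1)).re + (l ^ (k + 1)).im] := by
    intro k
    induction k with
    | zero =>
      subst hM hx
      ext i
      fin_cases i <;> simp [Matrix.mulVec, dotProduct, Fin.sum_univ_four, hre, him] <;> ring
    | succ k ih =>
      rw [pow_succ' M, ← Matrix.mulVec_mulVec, ih, pow_succ' l (k + 1), hM]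
      have e1 : (l ^ (k + 1)).re = c * (l ^ k).re - d * (l ^ k).im := by
        rw [pow_succ', Complex.mul_re, hre, him]
      have e2 : (l ^ (k + 1)).im = c * (l ^ k).im + d * (l ^ k).re := by
        rw [pow_succ', Complex.mul_im, hre, him]
      ext i
      fin_cases i <;>
        simp [Matrix.mulVec, dotProduct, Fin.sum_univ_four, hre, him, e1, e2] <;> ring
  have hns : Complex.normSq l = 1 := by
    rw [Complex.normSq_apply, hre, him]; linarith
  have e1 : (l ^ (k + 1)).re = c * (l ^ k).re - d * (l ^ k).im := by
    rw [pow_succ', Complex.mul_re, hre, him]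
  have e2 : (l ^ (k + 1)).im = c * (l ^ k).im + d * (l ^ k).re := by
    rw [pow_succ', Complex.mul_im, hre, him]
  rw [hp, key k, Complex.inv_re, Complex.inv_im, hns, hre, him]
  have hD : c / 1 * ((l ^ (k + 1)).re - (l ^ (k + 1)).im)
      - -d / 1 * ((l ^ (k + 1)).re + (l ^ (k + 1)).im) = (l ^ k).re - (l ^ k).im := by
    rw [e1, e2]
    linear_combination ((l ^ k).re - (l ^ k).im) * h
  have hne' := sub_ne_zero.mpr hne
  simp only [Matrix.cons_val]
  rw [hD, add_sub_cancel_left, mul_div_assoc, div_self hne']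
  push_cast
  ring
end

section
/- Let d ≥ 1, let M be a d × d matrix with rational entries, let x ∈ ℚ^d, and let q ∈ ℚ[X₁, …, X_d] be a polynomial in d variables with rational coefficients. Then the set {n ∈ ℕ : q(Mⁿx) = 0} is semilinear: there exist a finite set F ⊆ ℕ and finitely many pairs (a₁,b₁), …, (a_k,b_k) ∈ ℕ × ℕ with each bᵢ ≥ 1 such that {n ∈ ℕ : q(Mⁿx) = 0} = F ∪ ⋃_{i=1}^{k} {aᵢ + bᵢ·m : m ∈ ℕ}. -/
open fwdDiff Polynomial


def SML.Semilin (S : Set ℕ) : Prop := ∃ (F : Finset ℕ) (k : ℕ) (a b : Fin k → ℕ),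
      (∀ i, 1 ≤ b i) ∧ S = ↑F ∪ ⋃ i : Fin k, {n : ℕ | ∃ m : ℕ, n = a i + b i * m}

namespace SML

lemma Semilin.of_finite {S : Set ℕ} (h : S.Finite) : Semilin S :=
  ⟨h.toFinset, 0, Fin.elim0, Fin.elim0, fun i => i.elim0, by simp⟩

lemma Semilin.univ : Semilin Set.univ :=
  ⟨∅, 1, fun _ => 0, fun _ => 1, by simp, by ext; simp⟩

lemma Semilin.union {S T : Set ℕ} (hS : Semilin S) (hT : Semilin T) : Semilin (S ∪ T) := by
  classical
  obtain ⟨F, k, a, b, hb, rfl⟩ := hS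
  obtain ⟨G, l, c, e, he, rfl⟩ := hT
  refine ⟨F ∪ G, k + l, Fin.append a c, Fin.append b e, ?_, ?_⟩
  · intro i
    refine Fin.addCases (fun i => ?_) (fun i => ?_) i
    · simpa using hb i
    · simpa using he i
  · ext n
    have : (∃ i m, n = Fin.append a c i + Fin.append b e i * m) ↔
        (∃ i m, n = a i + b i * m) ∨ (∃ i m, n = c i + e i * m) := by
      constructor
      · rintro ⟨i, hi⟩
        revert hi
        refine Fin.addCases (fun i hi => ?_) (fun i hi => ?_) i
        · exact Or.inl ⟨i, by simpa using hi⟩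
        · exact Or.inr ⟨i, by simpa using hi⟩
      · rintro (⟨i, hi⟩ | ⟨i, hi⟩)
        · exact ⟨Fin.castAdd l i, by simpa using hi⟩
        · exact ⟨Fin.natAdd k i, by simpa using hi⟩
    simp only [Set.mem_union, Set.mem_iUnion, Set.mem_ofPred_eq, Finset.coe_union, this]
    exact or_or_or_comm

lemma Semilin.image {S : Set ℕ} (hS : Semilin S) (c N : ℕ) (hN : 1 ≤ N) :
    Semilin ((fun m => c + N * m) '' S) := by
  classical
  obtain ⟨F, k, a, b, hb, rfl⟩ := hS
  refine ⟨F.image (fun m => c + N * m), k, fun i => c + N * a i, fun i => N * b i,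
    fun i => Nat.mul_pos hN (hb i), ?_⟩
  rw [Set.image_union, Set.image_iUnion, Finset.coe_image]
  congr 1
  refine Set.iUnion_congr fun i => ?_
  ext n
  simp only [Set.mem_image, Set.mem_ofPred_eq]
  constructor
  · rintro ⟨_, ⟨m, rfl⟩, rfl⟩
    exact ⟨m, by ring⟩
  · rintro ⟨m, rfl⟩
    exact ⟨_, ⟨m, rfl⟩, by ring⟩

lemma Semilin.biUnion {ι : Type*} (s : Finset ι) (S : ι → Set ℕ) (h : ∀ i ∈ s, Semilin (S i)) :
    Semilin (⋃ i ∈ s, S i) := by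
  classical
  induction s using Finset.induction_on with
  | empty => simpa using Semilin.of_finite Set.finite_empty
  | insert a s ha ih =>
    rw [Finset.set_biUnion_insert]
    exact (h a (by simp)).union (ih fun i hi => h i (by simp [hi]))

section
variable {p : ℕ} [hp : Fact p.Prime]

def Good (j : ℕ) (f : ℕ → ℤ_[p]) : Prop := ∀ k n, (p : ℤ_[p]) ^ (j + k) ∣ (Δ_[1])^[k] f n

lemma Good.diff {j : ℕ} {f : ℕ → ℤ_[p]} (h : Good j f) : Good (j+1) (Δ_[1] f) := by
  intro k n
  have := h (k+1) n
  rw [Function.iterate_succ_apply] at this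
  convert this using 2
  ring

lemma Good.add {j : ℕ} {f g : ℕ → ℤ_[p]} (hf : Good j f) (hg : Good j g) : Good j (f + g) := by
  intro k n
  rw [fwdDiff_iter_add]
  exact dvd_add (hf k n) (hg k n)

lemma Good.mul_aux (k : ℕ) : ∀ (i j : ℕ) (f g : ℕ → ℤ_[p]) (_ : Good i f) (_ : Good j g) (n : ℕ),
    (p : ℤ_[p]) ^ (i + j + k) ∣ (Δ_[1])^[k] (f * g) n := by
  induction k with
  | zero =>
    intro i j f g hf hg n
    have := mul_dvd_mul (hf 0 n) (hg 0 n)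
    rw [← pow_add] at this
    simpa using this
  | succ k ih =>
    intro i j f g hf hg n
    have e : Δ_[1] (f * g) = Δ_[1] f * g + f * Δ_[1] g + Δ_[1] f * Δ_[1] g :=
      fwdDiff_smul 1 f g
    rw [Function.iterate_succ_apply, e, fwdDiff_iter_add, fwdDiff_iter_add]
    have h1 := ih _ _ _ _ hf.diff hg n
    have h2 := ih _ _ _ _ hf hg.diff n
    have h3 := ih _ _ _ _ hf.diff hg.diff n
    refine dvd_add (dvd_add ?_ ?_) ?_
    · exact (pow_dvd_pow _ (by omega)).trans h1
    · exact (pow_dvd_pow _ (by omega)).trans h2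
    · exact (pow_dvd_pow _ (by omega)).trans h3

lemma Good.mul {f g : ℕ → ℤ_[p]} (hf : Good 0 f) (hg : Good 0 g) : Good 0 (f * g) := by
  intro k n
  simpa using Good.mul_aux k 0 0 f g hf hg n

lemma Good.const (c : ℤ_[p]) : Good 0 (fun _ => c) := by
  intro k n
  cases k with
  | zero => simp
  | succ k =>
    rw [Function.iterate_succ_apply, fwdDiff_const]
    have : (Δ_[1])^[k] (fun _ : ℕ => (0 : ℤ_[p])) = 0 := by
      induction k with
      | zero => rfl
      | succ k ih => rw [Function.iterate_succ_apply, fwdDiff_const, ih]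
    rw [this]
    simp

lemma Good.eval {e : ℕ} (y : ℕ → Fin e → ℤ_[p]) (hy : ∀ i, Good 0 (fun n => y n i))
    (q : MvPolynomial (Fin e) ℤ_[p]) : Good 0 (fun n => MvPolynomial.eval (y n) q) := by
  induction q using MvPolynomial.induction_on with
  | C a => simpa using Good.const a
  | add a b ha hb => simp only [map_add]; exact ha.add hb
  | mul_X a i ha => simp only [map_mul, MvPolynomial.eval_X]; exact ha.mul (hy i)

lemma exists_e (hp2 : 2 < p) (k : ℕ) : ∃ e : ℤ_[p], (k.factorial : ℤ_[p]) * e = (p : ℤ_[p]) ^ k ∧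
    (p : ℤ_[p]) ^ (k / 2) ∣ e := by
  have h := sub_one_mul_padicValNat_factorial (p := p) k
  set v := padicValNat p k.factorial with hv
  have hle : 2 * v ≤ k := by
    have : 2 * v ≤ (p - 1) * v := Nat.mul_le_mul_right _ (by omega)
    omega
  obtain ⟨u, hu, hu'⟩ : ∃ u, k.factorial = p ^ v * u ∧ ¬ p ∣ u := by
    obtain ⟨u, hu⟩ := pow_padicValNat_dvd (p := p) (n := k.factorial)
    refine ⟨u, hu, fun ⟨w, hw⟩ => ?_⟩
    refine pow_succ_padicValNat_not_dvd (p := p) (n := k.factorial) (Nat.factorial_ne_zero k) ⟨w, ?_⟩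
    rw [pow_succ, mul_assoc, ← hw]; exact hu
  have hun : IsUnit (u : ℤ_[p]) := by
    rw [PadicInt.isUnit_iff]
    apply le_antisymm (PadicInt.norm_le_one _)
    by_contra hlt
    push Not at hlt
    have := (PadicInt.norm_int_lt_one_iff_dvd (p := p) (u : ℤ)).1 (by simpa using hlt)
    exact hu' (by exact_mod_cast this)
  obtain ⟨w, hw⟩ := hun
  refine ⟨p ^ (k - v) * (↑w⁻¹ : ℤ_[p]), ?_, ?_⟩
  · rw [hu]
    push_cast
    rw [← hw]
    calc (p:ℤ_[p]) ^ v * w * (p ^ (k - v) * (↑w⁻¹ : ℤ_[p])) = (p ^ v * p ^ (k-v)) * (w * (↑w⁻¹ : ℤ_[p])) := by ring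
      _ = _ := by rw [Units.mul_inv, mul_one, ← pow_add]; congr 1; omega
  · exact Dvd.dvd.mul_right (pow_dvd_pow _ (by omega)) _

lemma key (hp2 : 2 < p) (f : ℕ → ℤ_[p]) (hf : Good 0 f) (hinf : {n | f n = 0}.Infinite) (n : ℕ) :
    f n = 0 := by
  classical
  choose e he he' using exists_e (p := p) hp2
  have hf0 : ∀ k, ∃ c, (Δ_[1])^[k] f 0 = (p : ℤ_[p]) ^ k * c := fun k => by
    have := hf k 0
    rw [zero_add] at this
    exact this
  choose c hc using hf0
  have heval : ∀ K m : ℕ, m < K →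
      (∑ k ∈ Finset.range K, C (e k * c k) * descPochhammer ℤ_[p] k).eval (m : ℤ_[p]) = f m := by
    intro K m hm
    have h1 := shift_eq_sum_fwdDiff_iter 1 f m 0
    simp only [zero_add, smul_eq_mul, mul_one] at h1
    rw [h1, eval_finsetSum]
    have hsub : Finset.range (m+1) ⊆ Finset.range K := by
      intro; simp; omega
    rw [← Finset.sum_subset hsub]
    · refine Finset.sum_congr rfl fun k _ => ?_
      rw [hc, ← he, eval_mul, eval_C, descPochhammer_eval_eq_descFactorial,
        Nat.descFactorial_eq_factorial_mul_choose]
      simp only [nsmul_eq_mul]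
      push_cast
      ring
    · intro k _ hk
      rw [eval_mul, descPochhammer_eval_eq_descFactorial, Nat.descFactorial_of_lt (by simp at hk; omega)]
      simp
  have hdvd : ∀ w : ℕ, (p : ℤ_[p]) ^ w ∣ f n := by
    intro w
    obtain ⟨T, hT, hTc⟩ := hinf.exists_subset_card_eq (2 * w)
    obtain ⟨K, hK⟩ : ∃ K, ∀ m ∈ insert n T, m < K :=
      ⟨(insert n T).sup id + 1, fun m hm => Nat.lt_succ_of_le (Finset.le_sup (f := id) hm)⟩
    set P := ∑ k ∈ Finset.range K, C (e k * c k) * descPochhammer ℤ_[p] k with hP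
    have hWdvd : (∏ m ∈ T, (X - C (m : ℤ_[p]))) ∣ P := by
      by_cases hP0 : P = 0
      · rw [hP0]; exact dvd_zero _
      have h2 := (Multiset.prod_X_sub_C_dvd_iff_le_roots hP0
        (T.val.map (fun m : ℕ => (m : ℤ_[p])))).2 (by
          rw [Multiset.le_iff_subset (T.nodup.map Nat.cast_injective)]
          intro z hz
          obtain ⟨m, hm, rfl⟩ := Multiset.mem_map.1 hz
          rw [mem_roots hP0, IsRoot, heval K m (hK m (by simp [Finset.mem_def.2 hm]))]
          exact hT hm)
      rw [Multiset.map_map] at h2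
      exact h2
    set φ := PadicInt.toZModPow (p := p) w
    have hker : ∀ z, φ z = 0 ↔ (p : ℤ_[p]) ^ w ∣ z := by
      intro z
      rw [← RingHom.mem_ker, PadicInt.ker_toZModPow, Ideal.mem_span_singleton]
    have hdeg : (P.map φ).degree < (2 * w : ℕ) := by
      rw [← mem_degreeLT, hP, Polynomial.map_sum]
      refine Submodule.sum_mem _ fun k _ => ?_
      by_cases hk : k < 2 * w
      · rw [mem_degreeLT]
        refine lt_of_le_of_lt (degree_map_le) ?_
        refine lt_of_le_of_lt degree_le_natDegree ?_
        have h3 := natDegree_C_mul_le (e k * c k) (descPochhammer ℤ_[p] k)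
        rw [descPochhammer_natDegree] at h3
        exact_mod_cast h3.trans_lt hk
      · have : φ (e k * c k) = 0 := by
          rw [hker]
          exact ((pow_dvd_pow _ (by omega)).trans (he' k)).mul_right _
        rw [Polynomial.map_mul, map_C, this]
        simp
    have hP0 : P.map φ = 0 := by
      by_contra hne
      have hmon : ((∏ m ∈ T, (X - C (m : ℤ_[p]))).map φ).Monic :=
        (monic_prod_of_monic _ _ fun m _ => monic_X_sub_C _).map φ
      rcases subsingleton_or_nontrivial (ZMod (p ^ w)) with hs | hs
      · exact hne (Subsingleton.elim _ _)
      refine hmon.not_dvd_of_degree_lt hne ?_ (Polynomial.map_dvd φ hWdvd)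
      rw [Monic.degree_map (monic_prod_of_monic _ _ fun m _ => monic_X_sub_C _)]
      rw [degree_prod]
      simp only [degree_X_sub_C, Finset.sum_const, hTc, nsmul_one]
      exact hdeg
    rw [← heval K n (hK n (by simp)), ← hker]
    rw [← Polynomial.eval_map_apply, hP0]
    simp
  refine PadicInt.ext_of_toZModPow.1 fun w => ?_
  rw [map_zero, ← RingHom.mem_ker, PadicInt.ker_toZModPow, Ideal.mem_span_singleton]
  exact hdvd w

lemma good_orbit {d e : ℕ} (B : Matrix (Fin d) (Fin d) ℤ_[p]) (w : Fin d → ℤ_[p]) (i : Fin e)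
    (L : Matrix (Fin e) (Fin d) ℤ_[p]) :
    Good 0 (fun m => ((L * (1 + (p : ℤ_[p]) • B) ^ m).mulVec w) i) := by
  have step : ∀ (k : ℕ) (L : Matrix (Fin e) (Fin d) ℤ_[p]),
      (Δ_[1])^[k] (fun m => ((L * (1 + (p : ℤ_[p]) • B) ^ m).mulVec w) i) =
        (p : ℤ_[p]) ^ k • (fun m => ((L * B ^ k * (1 + (p : ℤ_[p]) • B) ^ m).mulVec w) i) := by
    intro k
    induction k with
    | zero => intro L; simp
    | succ k ih =>
      intro L
      have h1 : Δ_[1] (fun m => ((L * (1 + (p : ℤ_[p]) • B) ^ m).mulVec w) i) =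
          (p : ℤ_[p]) • (fun m => ((L * B * (1 + (p : ℤ_[p]) • B) ^ m).mulVec w) i) := by
        funext m
        have h2 : L * (1 + (p : ℤ_[p]) • B) ^ (m + 1) = L * (1 + (p : ℤ_[p]) • B) ^ m +
            (p : ℤ_[p]) • (L * B * (1 + (p : ℤ_[p]) • B) ^ m) := by
          rw [pow_succ', add_mul, one_mul, Matrix.mul_add, Matrix.smul_mul, Matrix.mul_smul,
            Matrix.mul_assoc]
        simp only [fwdDiff, h2, Matrix.add_mulVec, Matrix.smul_mulVec, Pi.add_apply, Pi.smul_apply]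
        ring
      rw [Function.iterate_succ_apply, h1, fwdDiff_iter_const_smul, ih, smul_smul, Matrix.mul_assoc L,
        ← pow_succ', ← pow_succ']
  intro k n
  rw [step, zero_add]
  exact Dvd.intro _ rfl

lemma exists_pow {d : ℕ} (A : Matrix (Fin d) (Fin d) ℤ_[p]) (hA : IsUnit A) :
    ∃ N, 1 ≤ N ∧ ∃ B : Matrix (Fin d) (Fin d) ℤ_[p], A ^ N = 1 + (p : ℤ_[p]) • B := by
  let Φ : Matrix (Fin d) (Fin d) ℤ_[p] →+* Matrix (Fin d) (Fin d) (ZMod p) :=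
    (PadicInt.toZMod (p := p)).mapMatrix
  obtain ⟨u, hu⟩ := hA.map Φ
  obtain ⟨N, hN, hN1⟩ := isOfFinOrder_iff_pow_eq_one.1 (isOfFinOrder_of_finite u)
  refine ⟨N, hN, ?_⟩
  have h0 : Φ (A ^ N - 1) = 0 := by
    rw [map_sub, map_pow, map_one, ← hu, ← Units.val_pow_eq_pow_val, hN1]
    simp
  have h1 : ∀ i j, ∃ b, (A ^ N - 1) i j = (p : ℤ_[p]) * b := by
    intro i j
    have h2 : PadicInt.toZMod ((A ^ N - 1) i j) = 0 := congrFun (congrFun h0 i) j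
    rw [← RingHom.mem_ker, PadicInt.ker_toZMod, PadicInt.maximalIdeal_eq_span_p,
      Ideal.mem_span_singleton] at h2
    exact h2
  choose b hb using h1
  refine ⟨Matrix.of b, ?_⟩
  rw [← sub_eq_iff_eq_add']
  ext i j
  rw [hb]
  rfl

lemma semilin_padic (hp2 : 2 < p) {d e : ℕ} (A : Matrix (Fin d) (Fin d) ℤ_[p]) (hA : IsUnit A)
    (w : Fin d → ℤ_[p]) (L : Matrix (Fin e) (Fin d) ℤ_[p]) (q : MvPolynomial (Fin e) ℤ_[p]) :
    Semilin {n | MvPolynomial.eval ((L * A ^ n).mulVec w) q = 0} := by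
  obtain ⟨N, hN, B, hB⟩ := exists_pow A hA
  have hsplit : {n | MvPolynomial.eval ((L * A ^ n).mulVec w) q = 0} =
      ⋃ a ∈ Finset.range N, (fun m => a + N * m) ''
        {m | MvPolynomial.eval ((L * A ^ (a + N * m)).mulVec w) q = 0} := by
    ext n
    simp only [Set.mem_iUnion, Set.mem_image, Set.mem_ofPred_eq, Finset.mem_range]
    constructor
    · intro h
      refine ⟨n % N, Nat.mod_lt _ hN, n / N, ?_, Nat.mod_add_div n N⟩
      rw [Nat.mod_add_div]; exact h
    · rintro ⟨a, -, m, h, rfl⟩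
      exact h
  rw [hsplit]
  refine Semilin.biUnion _ _ fun a _ => Semilin.image ?_ _ _ hN
  have hg : Good 0 (fun m => MvPolynomial.eval ((L * A ^ (a + N * m)).mulVec w) q) := by
    refine Good.eval _ (fun i => ?_) q
    simp only [pow_add, pow_mul, hB, ← Matrix.mul_assoc]
    exact good_orbit B w i (L * A ^ a)
  by_cases hfin : {m | MvPolynomial.eval ((L * A ^ (a + N * m)).mulVec w) q = 0}.Finite
  · exact Semilin.of_finite hfin
  · have := key hp2 _ hg hfin
    convert Semilin.univ
    ext m
    simpa using this m

end

lemma exists_prime (s : Finset ℚ) : ∃ p : ℕ, p.Prime ∧ 2 < p ∧ ∀ r ∈ s, ¬ p ∣ r.den := by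
  obtain ⟨p, hp, hpp⟩ := Nat.exists_infinite_primes (s.sup Rat.den + 3)
  refine ⟨p, hpp, by omega, fun r hr hd => ?_⟩
  have h1 := Nat.le_of_dvd r.den_pos hd
  have h2 : r.den ≤ s.sup Rat.den := Finset.le_sup hr
  omega

lemma semilin_rat {d e : ℕ} (A : Matrix (Fin d) (Fin d) ℚ) (hA : IsUnit A)
    (w : Fin d → ℚ) (L : Matrix (Fin e) (Fin d) ℚ) (q : MvPolynomial (Fin e) ℚ) :
    Semilin {n | MvPolynomial.eval ((L * A ^ n).mulVec w) q = 0} := by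
  classical
  obtain ⟨C, hAC⟩ := hA.exists_right_inv
  obtain ⟨p, hpp, hp2, hden⟩ := exists_prime
    (Finset.univ.image (fun x : Fin d × Fin d => A x.1 x.2) ∪
     Finset.univ.image (fun x : Fin d × Fin d => C x.1 x.2) ∪
     Finset.univ.image (fun x : Fin e × Fin d => L x.1 x.2) ∪
     Finset.univ.image w ∪ q.coeffs)
  have : Fact p.Prime := ⟨hpp⟩
  let ι : ℤ_[p] →+* ℚ_[p] := PadicInt.Coe.ringHom
  have hι : Function.Injective ι := Subtype.coe_injective
  let κ : ℚ →+* ℚ_[p] := Rat.castHom ℚ_[p]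
  have lift : ∀ r : ℚ, ¬ p ∣ r.den → ∃ z : ℤ_[p], ι z = κ r := fun r hr =>
    ⟨⟨(r : ℚ_[p]), Padic.norm_rat_le_one hr⟩, rfl⟩
  have hA' : ∀ i j, ∃ z : ℤ_[p], ι z = κ (A i j) := fun i j => lift _ (hden _ (by
    simp only [Finset.mem_union, Finset.mem_image, Finset.mem_univ, true_and, Prod.exists]
    exact Or.inl (Or.inl (Or.inl (Or.inl ⟨i, j, rfl⟩)))))
  have hC' : ∀ i j, ∃ z : ℤ_[p], ι z = κ (C i j) := fun i j => lift _ (hden _ (by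
    simp only [Finset.mem_union, Finset.mem_image, Finset.mem_univ, true_and, Prod.exists]
    exact Or.inl (Or.inl (Or.inl (Or.inr ⟨i, j, rfl⟩)))))
  have hL' : ∀ i j, ∃ z : ℤ_[p], ι z = κ (L i j) := fun i j => lift _ (hden _ (by
    simp only [Finset.mem_union, Finset.mem_image, Finset.mem_univ, true_and, Prod.exists]
    exact Or.inl (Or.inl (Or.inr ⟨i, j, rfl⟩))))
  have hw' : ∀ i, ∃ z : ℤ_[p], ι z = κ (w i) := fun i => lift _ (hden _ (by
    simp only [Finset.mem_union, Finset.mem_image, Finset.mem_univ, true_and, Prod.exists]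
    exact Or.inl (Or.inr ⟨i, rfl⟩)))
  have hq' : MvPolynomial.map κ q ∈ Set.range (MvPolynomial.map (σ := Fin e) ι) := by
    rw [MvPolynomial.mem_range_map_iff_coeffs_subset]
    intro z hz
    have hz' := MvPolynomial.coeffs_map κ q hz
    obtain ⟨r, hr, rfl⟩ := Finset.mem_image.1 hz'
    exact lift r (hden r (Finset.mem_union_right _ hr))
  choose A' hA' using hA'
  choose C' hC' using hC'
  choose L' hL' using hL'
  choose w' hw' using hw'
  obtain ⟨q', hq'⟩ := hq'
  have eA : (Matrix.of A').map ι = A.map κ := by ext i j; exact (hA' i j)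
  have eC : (Matrix.of C').map ι = C.map κ := by ext i j; exact (hC' i j)
  have eL : (Matrix.of L').map ι = L.map κ := by ext i j; exact (hL' i j)
  have ew : ι ∘ w' = κ ∘ w := by ext i; exact (hw' i)
  have hunit : IsUnit (Matrix.of A') := by
    have h1 : (Matrix.of A') * (Matrix.of C') = 1 := by
      apply Matrix.map_injective hι
      beta_reduce
      rw [Matrix.map_mul, eA, eC, ← Matrix.map_mul, hAC]
      simp
    exact IsUnit.of_mul_eq_one _ h1
  have hmv : ∀ n, ι ∘ ((Matrix.of L' * (Matrix.of A') ^ n).mulVec w') =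
      κ ∘ ((L * A ^ n).mulVec w) := by
    intro n
    have h2 : (Matrix.of A' ^ n).map ι = (A ^ n).map κ := by
      rw [Matrix.map_pow, Matrix.map_pow, eA]
    funext i
    simp only [Function.comp_apply]
    rw [RingHom.map_mulVec, RingHom.map_mulVec, Matrix.map_mul, Matrix.map_mul, h2, eL, ew]
  convert semilin_padic hp2 (Matrix.of A') hunit w' (Matrix.of L') q' using 1
  ext n
  simp only [Set.mem_ofPred_eq]
  rw [← map_eq_zero_iff ι hι, ← map_eq_zero_iff κ κ.injective, MvPolynomial.eval₂_comp,
    MvPolynomial.eval₂_comp, hmv, ← MvPolynomial.eval_map, ← MvPolynomial.eval_map, hq']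

lemma semilin_end {e : ℕ} (q : MvPolynomial (Fin e) ℚ) (N : ℕ) :
    ∀ (V : Type) [AddCommGroup V] [Module ℚ V] [FiniteDimensional ℚ V] (f : Module.End ℚ V) (x : V)
      (L : V →ₗ[ℚ] (Fin e → ℚ)), Module.finrank ℚ V = N →
      Semilin {n | MvPolynomial.eval (L ((f ^ n) x)) q = 0} := by
  induction N using Nat.strong_induction_on with
  | _ N ih =>
  intro V _ _ _ f x L hV
  by_cases hf : Function.Surjective f
  · have hu : IsUnit f := by
      rw [Module.End.isUnit_iff]
      exact ⟨LinearMap.injective_iff_surjective.2 hf, hf⟩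
    let b := Module.finBasis ℚ V
    have hA : IsUnit (LinearMap.toMatrix b b f) := hu.map (LinearMap.toMatrixAlgEquiv b)
    convert semilin_rat _ hA (b.repr x) (LinearMap.toMatrix b (Pi.basisFun ℚ (Fin e)) L) q using 1
    ext n
    have h1 : (LinearMap.toMatrix b b f) ^ n = LinearMap.toMatrix b b (f ^ n) :=
      (map_pow (LinearMap.toMatrixAlgEquiv b) f n).symm
    have h2 : ((LinearMap.toMatrix b (Pi.basisFun ℚ (Fin e)) L) *
        (LinearMap.toMatrix b b f) ^ n).mulVec (b.repr x) = L ((f ^ n) x) := by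
      rw [h1, ← Matrix.mulVec_mulVec, LinearMap.toMatrix_mulVec_repr,
        LinearMap.toMatrix_mulVec_repr]
      ext; simp
    simp only [Set.mem_ofPred_eq]
    rw [h2]
  · have hlt : Module.finrank ℚ (LinearMap.range f) < N := by
      rw [← hV]
      exact Submodule.finrank_lt (fun h => hf (LinearMap.range_eq_top.1 h))
    let g : Module.End ℚ (LinearMap.range f) := f.rangeRestrict ∘ₗ (LinearMap.range f).subtype
    have h := ih _ hlt (LinearMap.range f) g (f.rangeRestrict x) (L ∘ₗ (LinearMap.range f).subtype) rfl
    have hg : ∀ n, (((g ^ n) (f.rangeRestrict x) : LinearMap.range f) : V) = (f ^ (n + 1)) x := by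
      intro n
      induction n with
      | zero => simp
      | succ n ihn =>
        rw [pow_succ', Module.End.mul_apply, pow_succ' f, Module.End.mul_apply, ← ihn]
        rfl
    have h0 : Semilin ({n | MvPolynomial.eval (L ((f ^ n) x)) q = 0} ∩ {0}) :=
      Semilin.of_finite ((Set.finite_singleton 0).inter_of_right _)
    convert h0.union (h.image 1 1 le_rfl) using 1
    ext n
    simp only [Set.mem_union, Set.mem_inter_iff, Set.mem_image, Set.mem_ofPred_eq,
      Set.mem_singleton_iff, LinearMap.comp_apply, Submodule.subtype_apply, hg]
    constructor
    · intro hn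
      cases n with
      | zero => exact Or.inl ⟨hn, rfl⟩
      | succ n => exact Or.inr ⟨n, hn, by ring⟩
    · rintro (⟨hn, -⟩ | ⟨m, hm, rfl⟩)
      · exact hn
      · rw [one_mul, add_comm]; exact hm

end SML

/-- For a rational matrix `M`, starting point `x ∈ ℚ^d` and a polynomial
`q ∈ ℚ[X₁,…,X_d]`, the set `{n ∈ ℕ : q(Mⁿx) = 0}` is semilinear: a union of a
finite set and finitely many full arithmetic progressions `{a + b·m : m ∈ ℕ}`
with `b ≥ 1`. -/
theorem zero_set_of_poly_orbit_semilinear (d : ℕ) (hd : 1 ≤ d)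
    (M : Matrix (Fin d) (Fin d) ℚ) (x : Fin d → ℚ)
    (q : MvPolynomial (Fin d) ℚ) :
    ∃ (F : Finset ℕ) (k : ℕ) (a b : Fin k → ℕ),
      (∀ i, 1 ≤ b i) ∧
      {n : ℕ | MvPolynomial.eval ((M ^ n).mulVec x) q = 0} =
        ↑F ∪ ⋃ i : Fin k, {n : ℕ | ∃ m : ℕ, n = a i + b i * m} := by
  have h := SML.semilin_end q d (Fin d → ℚ) (Matrix.toLin' M) x LinearMap.id (by simp)
  have e : ∀ n, ((Matrix.toLin' M) ^ n) x = (M ^ n).mulVec x := by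
    intro n
    rw [← Matrix.toLin'_pow, Matrix.toLin'_apply]
  simp only [LinearMap.id_apply, e] at h
  exact h
end

section
/- The Kannan–Lipton Orbit Problem (point-to-point reachability) is decidable: for every d ≥ 1, the predicate on triples (M, x, y), where M is a d × d matrix with rational entries and x, y ∈ ℚ^d, asking whether there exists n ∈ ℕ with Mⁿx = y, is a computable (decidable) predicate; that is, there exists a computable function f mapping each triple (M, x, y) to a Boolean such that f(M, x, y) = true if and only if ∃ n ∈ ℕ, Mⁿx = y. -/
namespace OrbitKL

/-! ## Computability part -/

section Comp
variable {α : Type*} [Primcodable α]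

theorem primrec_toNat : Primrec Int.toNat := by
  have h : Primrec fun z : ℤ => if Encodable.encode z % 2 = 0 then Encodable.encode z / 2 else 0 :=
    Primrec.ite (Primrec.eq.comp (Primrec.nat_mod.comp Primrec.encode (Primrec.const 2))
      (Primrec.const 0)) (Primrec.nat_div.comp Primrec.encode (Primrec.const 2)) (Primrec.const 0)
  refine h.of_eq fun z => ?_
  cases z with
  | ofNat n =>
    have : Encodable.encode (Int.ofNat n) = 2 * n := rfl
    rw [this]; simp
  | negSucc n =>
    have : Encodable.encode (Int.negSucc n) = 2 * n + 1 := rfl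
    rw [this, if_neg (by omega)]; rfl

theorem primrec_negToNat : Primrec fun z : ℤ => (-z).toNat := by
  have h : Primrec fun z : ℤ => if Encodable.encode z % 2 = 0 then 0
      else (Encodable.encode z + 1) / 2 :=
    Primrec.ite (Primrec.eq.comp (Primrec.nat_mod.comp Primrec.encode (Primrec.const 2))
      (Primrec.const 0)) (Primrec.const 0)
      (Primrec.nat_div.comp (Primrec.succ.comp Primrec.encode) (Primrec.const 2))
  refine h.of_eq fun z => ?_
  cases z with
  | ofNat n =>
    have : Encodable.encode (Int.ofNat n) = 2 * n := rfl
    rw [this]; simp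
  | negSucc n =>
    have : Encodable.encode (Int.negSucc n) = 2 * n + 1 := rfl
    rw [this, if_neg (by omega)]
    simp [Int.negSucc_eq]; omega

theorem primrec_sub : Primrec₂ fun a b : ℕ => (a : ℤ) - b := by
  have h : Primrec₂ fun a b : ℕ => Denumerable.ofNat ℤ (if b ≤ a then 2 * (a - b)
      else 2 * (b - a - 1) + 1) :=
    (Primrec.ofNat ℤ).comp <| Primrec.ite (Primrec.nat_le.comp Primrec.snd Primrec.fst)
      (Primrec.nat_mul.comp (Primrec.const 2) (Primrec.nat_sub.comp Primrec.fst Primrec.snd))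
      (Primrec.succ.comp (Primrec.nat_mul.comp (Primrec.const 2) (Primrec.nat_sub.comp
        (Primrec.nat_sub.comp Primrec.snd Primrec.fst) (Primrec.const 1))))
  refine h.of_eq fun a b => ?_
  split_ifs with hab
  · have : Encodable.encode (Int.ofNat (a - b)) = 2 * (a - b) := rfl
    rw [← this, Denumerable.ofNat_encode]
    simp [hab]
  · have : Encodable.encode (Int.negSucc (b - a - 1)) = 2 * (b - a - 1) + 1 := rfl
    rw [← this, Denumerable.ofNat_encode, Int.negSucc_eq]; omega

theorem primrec_intAdd : Primrec₂ fun a b : ℤ => a + b := by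
  have h : Primrec₂ fun a b : ℤ => ((a.toNat + b.toNat : ℕ) : ℤ) - ((-a).toNat + (-b).toNat : ℕ) :=
    primrec_sub.comp
      (Primrec.nat_add.comp (primrec_toNat.comp Primrec.fst) (primrec_toNat.comp Primrec.snd))
      (Primrec.nat_add.comp (primrec_negToNat.comp Primrec.fst) (primrec_negToNat.comp Primrec.snd))
  exact h.of_eq fun a b => by omega

theorem primrec_intMul : Primrec₂ fun a b : ℤ => a * b := by
  have h : Primrec₂ fun a b : ℤ =>
      ((a.toNat * b.toNat + (-a).toNat * (-b).toNat : ℕ) : ℤ) -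
        (a.toNat * (-b).toNat + (-a).toNat * b.toNat : ℕ) :=
    primrec_sub.comp
      (Primrec.nat_add.comp
        (Primrec.nat_mul.comp (primrec_toNat.comp Primrec.fst) (primrec_toNat.comp Primrec.snd))
        (Primrec.nat_mul.comp (primrec_negToNat.comp Primrec.fst)
          (primrec_negToNat.comp Primrec.snd)))
      (Primrec.nat_add.comp
        (Primrec.nat_mul.comp (primrec_toNat.comp Primrec.fst) (primrec_negToNat.comp Primrec.snd))
        (Primrec.nat_mul.comp (primrec_negToNat.comp Primrec.fst)
          (primrec_toNat.comp Primrec.snd)))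
  refine h.of_eq fun a b => ?_
  have ha : a = a.toNat - (-a).toNat := by omega
  have hb : b = b.toNat - (-b).toNat := by omega
  conv_rhs => rw [ha, hb]
  push_cast; ring

theorem primrec_natAbs : Primrec Int.natAbs :=
  (Primrec.nat_add.comp primrec_toNat primrec_negToNat).of_eq fun a => by
    show _ + _ = _
    omega

theorem primrec_natCast : Primrec fun n : ℕ => (n : ℤ) :=
  (primrec_sub.comp Primrec.id (Primrec.const 0)).of_eq fun a => by simp

/-- the set of raw codes of rationals -/
def RawSet (k : ℕ) : Prop :=
  0 < k.unpair.2 ∧ ∀ e < k.unpair.2 + 1,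
    ¬ (((k.unpair.1 + 1) / 2) % e = 0 ∧ k.unpair.2 % e = 0 ∧ ¬ e = 1)

theorem natAbs_eq_encode (z : ℤ) : z.natAbs = (Encodable.encode z + 1) / 2 := by
  cases z with
  | ofNat n =>
    have : Encodable.encode (Int.ofNat n) = 2 * n := rfl
    rw [this]; simp; omega
  | negSucc n =>
    have : Encodable.encode (Int.negSucc n) = 2 * n + 1 := rfl
    rw [this]; simp; omega

/-- raw code -/
def raw (q : ℚ) : ℕ := Nat.pair (Encodable.encode q.num) q.den

theorem rawSet_iff (k : ℕ) : RawSet k ↔ ∃ q, raw q = k := by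
  have key : ∀ a b : ℕ, 0 < b → ((∀ e < b + 1, ¬ (a % e = 0 ∧ b % e = 0 ∧ ¬ e = 1)) ↔
      a.Coprime b) := by
    intro a b hb
    constructor
    · intro h
      by_contra hc
      exact h (a.gcd b) (Nat.lt_succ_of_le (Nat.gcd_le_right _ hb))
        ⟨Nat.mod_eq_zero_of_dvd (Nat.gcd_dvd_left _ _),
          Nat.mod_eq_zero_of_dvd (Nat.gcd_dvd_right _ _), hc⟩
    · rintro h e - ⟨h1, h2, h3⟩
      exact h3 (Nat.eq_one_of_dvd_coprimes h (Nat.dvd_of_mod_eq_zero h1)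
        (Nat.dvd_of_mod_eq_zero h2))
  unfold RawSet
  constructor
  · rintro ⟨h1, h2⟩
    rw [key _ _ h1] at h2
    refine ⟨⟨Denumerable.ofNat ℤ k.unpair.1, k.unpair.2, h1.ne', ?_⟩, ?_⟩
    · rw [natAbs_eq_encode, Denumerable.encode_ofNat]; exact h2
    · simp only [raw, Denumerable.encode_ofNat, Nat.pair_unpair]
  · rintro ⟨q, rfl⟩
    have hp : 0 < (raw q).unpair.2 := by simp [raw, q.den_pos]
    refine ⟨hp, ?_⟩
    rw [key _ _ hp]
    simp only [raw, Nat.unpair_pair]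
    rw [← natAbs_eq_encode]
    exact q.reduced

theorem rawSet_primrec : PrimrecPred RawSet := by
  have h1 : PrimrecRel fun (e : ℕ) (y : ℕ) =>
      ¬ (((y.unpair.1 + 1) / 2) % e = 0 ∧ y.unpair.2 % e = 0 ∧ ¬ e = 1) := by
    have u1 : Primrec fun p : ℕ × ℕ => p.2.unpair.1 :=
      Primrec.fst.comp (Primrec.unpair.comp Primrec.snd)
    have u2 : Primrec fun p : ℕ × ℕ => p.2.unpair.2 :=
      Primrec.snd.comp (Primrec.unpair.comp Primrec.snd)
    refine PrimrecPred.not (PrimrecPred.and ?_ (PrimrecPred.and ?_ (PrimrecPred.not ?_)))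
    · exact Primrec.eq.comp (Primrec.nat_mod.comp (Primrec.nat_div.comp (Primrec.succ.comp u1)
        (Primrec.const 2)) Primrec.fst) (Primrec.const 0)
    · exact Primrec.eq.comp (Primrec.nat_mod.comp u2 Primrec.fst) (Primrec.const 0)
    · exact Primrec.eq.comp Primrec.fst (Primrec.const 1)
  have h2 := h1.forall_lt
  have u2 : Primrec fun p : ℕ => p.unpair.2 := Primrec.snd.comp Primrec.unpair
  exact PrimrecPred.and (Primrec.nat_lt.comp (Primrec.const 0) u2)
    (h2.comp (Primrec.succ.comp u2) Primrec.id)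

/-- the code of a rational -/
def enc (q : ℚ) : ℕ := @Encodable.encode ℚ Primcodable.toEncodable q

theorem encode_rat (q : ℚ) [DecidablePred RawSet] :
    enc q = ((List.range (raw q)).filter (fun k => RawSet k)).length := by
  let := @Encodable.decidableRangeEncode ℚ Rat.instEncodable
  have : enc q = (List.range (@Encodable.encode ℚ Rat.instEncodable q)).countP
      (· ∈ Set.range (@Encodable.encode ℚ Rat.instEncodable)) := rfl
  rw [this, List.countP_eq_length_filter]
  congr 1
  apply List.filter_congr
  intro k _
  rw [decide_eq_decide, rawSet_iff]
  rfl

theorem computable_raw : Computable raw := by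
  classical
  let P : ℚ → ℕ → Prop := fun q k => RawSet k ∧
    ((List.range k).filter (fun k => RawSet k)).length = enc q
  have hP : PrimrecPred fun p : ℚ × ℕ => P p.1 p.2 := by
    refine PrimrecPred.and (rawSet_primrec.comp Primrec.snd) ?_
    exact Primrec.eq.comp (Primrec.list_length.comp
      ((Primrec.listFilter rawSet_primrec).comp (Primrec.list_range.comp Primrec.snd)))
      (Primrec.encode.comp Primrec.fst)
  have hex : ∀ q, ∃ k, P q k := fun q => ⟨raw q, (rawSet_iff _).2 ⟨q, rfl⟩, (encode_rat q).symm⟩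
  refine (Computable.find hP.computablePred hex).of_eq fun q => ?_
  obtain ⟨h1, h2⟩ := Nat.find_spec (hex q)
  obtain ⟨q', hq'⟩ := (rawSet_iff _).1 h1
  rw [← hq', ← encode_rat] at h2
  replace h2 := (@Encodable.encode_inj ℚ Primcodable.toEncodable _ _).1 h2
  rw [← hq', h2]

theorem computable_num : Computable Rat.num :=
  ((Computable.ofNat ℤ).comp (Computable.fst.comp (Computable.unpair.comp computable_raw))).of_eq
    fun q => by simp only [raw, Nat.unpair_pair, Denumerable.ofNat_encode]

theorem computable_den : Computable Rat.den :=
  (Computable.snd.comp (Computable.unpair.comp computable_raw)).of_eq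
    fun q => by simp [raw]

theorem comp_fin {n : ℕ} {σ : Type*} [Primcodable σ] {f : α → Fin n → σ}
    (h : ∀ i, Computable fun a => f a i) : Computable f := by
  have h1 := Computable.vector_ofFn (f := fun i a => f a i) h
  have h2 : Computable fun v : List.Vector σ n => v.get :=
    (Primrec.fin_curry.2 Primrec.vector_get).to_comp
  exact (h2.comp h1).of_eq fun a => by ext i; simp

theorem comp_app {n : ℕ} {σ : Type*} [Primcodable σ] {f : α → Fin n → σ}
    (h : Computable f) (i : Fin n) : Computable fun a => f a i :=
  Computable.fin_app.comp h (Computable.const i)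

theorem comp_sumZ {ι : Type*} (s : Finset ι) (f : ι → α → ℤ) (h : ∀ i, Computable (f i)) :
    Computable fun a => ∑ i ∈ s, f i a := by
  classical
  induction s using Finset.induction_on with
  | empty => simpa using Computable.const 0
  | insert i s hi ih =>
    simp only [Finset.sum_insert hi]
    exact primrec_intAdd.to_comp.comp (h i) ih

theorem comp_sumN {ι : Type*} (s : Finset ι) (f : ι → α → ℕ) (h : ∀ i, Computable (f i)) :
    Computable fun a => ∑ i ∈ s, f i a := by
  classical
  induction s using Finset.induction_on with
  | empty => simpa using Computable.const 0
  | insert i s hi ih =>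
    simp only [Finset.sum_insert hi]
    exact Primrec.nat_add.to_comp.comp (h i) ih

theorem comp_prodN {ι : Type*} (s : Finset ι) (f : ι → α → ℕ) (h : ∀ i, Computable (f i)) :
    Computable fun a => ∏ i ∈ s, f i a := by
  classical
  induction s using Finset.induction_on with
  | empty => simpa using Computable.const 1
  | insert i s hi ih =>
    simp only [Finset.prod_insert hi]
    exact Primrec.nat_mul.to_comp.comp (h i) ih

theorem comp_powN (C : ℕ) {f : α → ℕ} (h : Computable f) : Computable fun a => f a ^ C := by
  simpa using comp_prodN (Finset.range C) (fun _ => f) (fun _ => h)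

end Comp

/-- size -/
def HH {d : ℕ} (M : Fin d → Fin d → ℤ) (x y : Fin d → ℤ) (D : ℕ) : ℕ :=
  2 + D + ∑ i, ∑ j, (M i j).natAbs + ∑ i, (x i).natAbs + ∑ i, (y i).natAbs

/-- common denominator -/
def DD {d : ℕ} (T : (Fin d → Fin d → ℚ) × (Fin d → ℚ) × (Fin d → ℚ)) : ℕ :=
  (∏ i, ∏ j, (T.1 i j).den) * ((∏ i, (T.2.1 i).den) * ∏ i, (T.2.2 i).den)

/-- clear denominators -/
def clr (D : ℕ) (q : ℚ) : ℤ := q.num * ((D / q.den : ℕ) : ℤ)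

theorem clr_eq (D : ℕ) (q : ℚ) (h : q.den ∣ D) : (clr D q : ℚ) = D * q := by
  obtain ⟨e, rfl⟩ := h
  rw [clr, Nat.mul_div_cancel_left _ q.den_pos]
  push_cast
  rw [mul_right_comm, Rat.den_mul_eq_num]

/-- instances -/
abbrev Ty (d : ℕ) := (Fin d → Fin d → ℚ) × (Fin d → ℚ) × (Fin d → ℚ)

/-- integer matrix -/
def M' {d : ℕ} (T : Ty d) (i j : Fin d) : ℤ := clr (DD T) (T.1 i j)
/-- integer source -/
def x' {d : ℕ} (T : Ty d) (i : Fin d) : ℤ := clr (DD T) (T.2.1 i)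
/-- integer target -/
def y' {d : ℕ} (T : Ty d) (i : Fin d) : ℤ := clr (DD T) (T.2.2 i)

section
variable {d : ℕ}

theorem cM (i j : Fin d) : Computable fun T : Ty d => T.1 i j :=
  comp_app (comp_app Computable.fst i) j
theorem cx (i : Fin d) : Computable fun T : Ty d => T.2.1 i :=
  comp_app (Computable.fst.comp Computable.snd) i
theorem cy (i : Fin d) : Computable fun T : Ty d => T.2.2 i :=
  comp_app (Computable.snd.comp Computable.snd) i

theorem cD : Computable fun T : Ty d => DD T := by
  have h1 : Computable fun T : Ty d => ∏ i, ∏ j, (T.1 i j).den :=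
    comp_prodN _ (fun i (T : Ty d) => ∏ j, (T.1 i j).den) fun i =>
      comp_prodN _ (fun j (T : Ty d) => (T.1 i j).den) fun j => computable_den.comp (cM i j)
  have h2 : Computable fun T : Ty d => ∏ i, (T.2.1 i).den :=
    comp_prodN _ (fun i (T : Ty d) => (T.2.1 i).den) fun i => computable_den.comp (cx i)
  have h3 : Computable fun T : Ty d => ∏ i, (T.2.2 i).den :=
    comp_prodN _ (fun i (T : Ty d) => (T.2.2 i).den) fun i => computable_den.comp (cy i)
  exact Primrec.nat_mul.to_comp.comp h1 (Primrec.nat_mul.to_comp.comp h2 h3)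

theorem cclr {f : Ty d → ℚ} (hf : Computable f) : Computable fun T => clr (DD T) (f T) :=
  primrec_intMul.to_comp.comp (computable_num.comp hf)
    (primrec_natCast.to_comp.comp (Primrec.nat_div.to_comp.comp cD (computable_den.comp hf)))

theorem cM' (i j : Fin d) : Computable fun T : Ty d => M' T i j := cclr (cM i j)
theorem cx' (i : Fin d) : Computable fun T : Ty d => x' T i := cclr (cx i)
theorem cy' (i : Fin d) : Computable fun T : Ty d => y' T i := cclr (cy i)

theorem cH : Computable fun T : Ty d => HH (M' T) (x' T) (y' T) (DD T) := by
  have hn := primrec_natAbs.to_comp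
  have hadd := Primrec.nat_add.to_comp
  have h1 : Computable fun T : Ty d => ∑ i, ∑ j, (M' T i j).natAbs :=
    comp_sumN _ (fun i (T : Ty d) => ∑ j, (M' T i j).natAbs) fun i =>
      comp_sumN _ (fun j (T : Ty d) => (M' T i j).natAbs) fun j => hn.comp (cM' i j)
  have h2 : Computable fun T : Ty d => ∑ i, (x' T i).natAbs :=
    comp_sumN _ (fun i (T : Ty d) => (x' T i).natAbs) fun i => hn.comp (cx' i)
  have h3 : Computable fun T : Ty d => ∑ i, (y' T i).natAbs :=
    comp_sumN _ (fun i (T : Ty d) => (y' T i).natAbs) fun i => hn.comp (cy' i)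
  exact hadd.comp (hadd.comp (hadd.comp (hadd.comp (Computable.const 2) cD) h1) h2) h3

end

section
variable {d : ℕ}

/-- integer orbit -/
def V (T : Ty d) (n : ℕ) : Fin d → ℤ := Nat.rec (x' T) (fun _ v i => ∑ j, M' T i j * v j) n
/-- scaled target -/
def W (T : Ty d) (n : ℕ) : Fin d → ℤ := Nat.rec (y' T) (fun _ v i => (DD T : ℤ) * v i) n
/-- integer reachability -/
def Q (T : Ty d) (n : ℕ) : Prop :=
  ((Matrix.of (M' T)) ^ n).mulVec (x' T) = (DD T : ℤ) ^ n • y' T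

theorem hV (T : Ty d) (n : ℕ) : V T n = ((Matrix.of (M' T)) ^ n).mulVec (x' T) := by
  induction n with
  | zero => simp [V]
  | succ n ih =>
    have : V T (n + 1) = (Matrix.of (M' T)).mulVec (V T n) := by
      ext i; rfl
    rw [this, ih, Matrix.mulVec_mulVec, pow_succ']

theorem hW (T : Ty d) (n : ℕ) : W T n = (DD T : ℤ) ^ n • y' T := by
  induction n with
  | zero => simp [W]
  | succ n ih =>
    have : W T (n + 1) = (DD T : ℤ) • (W T n) := by
      ext i; rfl
    rw [this, ih, smul_smul, pow_succ']

theorem cV : Computable fun p : Ty d × ℕ => V p.1 p.2 := by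
  refine Computable.nat_rec (f := fun p : Ty d × ℕ => p.2) (g := fun p => x' p.1)
    (h := fun p q i => ∑ j, M' p.1 i j * q.2 j) Computable.snd
    ((comp_fin cx').comp Computable.fst) ?_
  refine comp_fin fun i => ?_
  refine comp_sumZ _ (fun j (r : (Ty d × ℕ) × (ℕ × (Fin d → ℤ))) => M' r.1.1 i j * r.2.2 j)
    fun j => ?_
  exact primrec_intMul.to_comp.comp ((cM' i j).comp (Computable.fst.comp Computable.fst))
    (comp_app (Computable.snd.comp Computable.snd) j)

theorem cW : Computable fun p : Ty d × ℕ => W p.1 p.2 := by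
  refine Computable.nat_rec (f := fun p : Ty d × ℕ => p.2) (g := fun p => y' p.1)
    (h := fun p q i => (DD p.1 : ℤ) * q.2 i) Computable.snd
    ((comp_fin cy').comp Computable.fst) ?_
  refine comp_fin fun i => ?_
  exact primrec_intMul.to_comp.comp
    (primrec_natCast.to_comp.comp (cD.comp (Computable.fst.comp Computable.fst)))
    (comp_app (Computable.snd.comp Computable.snd) i)

theorem cQ [∀ p : Ty d × ℕ, Decidable (Q p.1 p.2)] :
    Computable fun p : Ty d × ℕ => decide (Q p.1 p.2) := by
  have h := (Primrec.eq (α := Fin d → ℤ)).decide.to_comp.comp cV cW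
  refine h.of_eq fun p => ?_
  rw [decide_eq_decide, hV, hW]
  rfl

theorem hDpos (T : Ty d) : 0 < DD T := by
  unfold DD
  have : ∀ q : ℚ, 0 < q.den := fun q => q.den_pos
  exact Nat.mul_pos (Finset.prod_pos fun i _ => Finset.prod_pos fun j _ => this _)
    (Nat.mul_pos (Finset.prod_pos fun i _ => this _) (Finset.prod_pos fun i _ => this _))

theorem hQ (T : Ty d) (n : ℕ) : Q T n ↔ ((Matrix.of T.1) ^ n).mulVec T.2.1 = T.2.2 := by
  have hD0 : (DD T : ℚ) ≠ 0 := by exact_mod_cast (hDpos T).ne'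
  have e1 : (Matrix.of (M' T)).map (Int.castRingHom ℚ) = (DD T : ℚ) • Matrix.of T.1 := by
    ext i j
    simp only [Matrix.map_apply, Matrix.of_apply, Matrix.smul_apply, smul_eq_mul]
    refine clr_eq _ _ ?_
    exact Dvd.dvd.mul_right ((Finset.dvd_prod_of_mem (fun j => (T.1 i j).den)
      (Finset.mem_univ j)).trans (Finset.dvd_prod_of_mem (fun i => ∏ j, (T.1 i j).den)
      (Finset.mem_univ i))) _
  have e2 : (fun i => ((x' T i : ℤ) : ℚ)) = (DD T : ℚ) • T.2.1 := by
    ext i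
    refine clr_eq _ _ ?_
    exact Dvd.dvd.mul_left (Dvd.dvd.mul_right (Finset.dvd_prod_of_mem
      (fun i => (T.2.1 i).den) (Finset.mem_univ i)) _) _
  have e3 : (fun i => ((y' T i : ℤ) : ℚ)) = (DD T : ℚ) • T.2.2 := by
    ext i
    refine clr_eq _ _ ?_
    exact Dvd.dvd.mul_left (Dvd.dvd.mul_left (Finset.dvd_prod_of_mem
      (fun i => (T.2.2 i).den) (Finset.mem_univ i)) _) _
  have e4 : Q T n ↔ (fun i => ((((Matrix.of (M' T)) ^ n).mulVec (x' T) i : ℤ) : ℚ)) =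
      fun i => ((((DD T : ℤ) ^ n • y' T) i : ℤ) : ℚ) := by
    simp only [Q, funext_iff, Int.cast_inj]
  have e5 : (fun i => ((((Matrix.of (M' T)) ^ n).mulVec (x' T) i : ℤ) : ℚ)) =
      ((DD T : ℚ) ^ n * DD T) • ((Matrix.of T.1) ^ n).mulVec T.2.1 := by
    ext i
    have := RingHom.map_mulVec (Int.castRingHom ℚ) ((Matrix.of (M' T)) ^ n) (x' T) i
    rw [Matrix.map_pow, e1] at this
    have e2' : (Int.castRingHom ℚ) ∘ x' T = (DD T : ℚ) • T.2.1 := e2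
    rw [e2', smul_pow, Matrix.smul_mulVec, Matrix.mulVec_smul, smul_smul] at this
    exact this
  have e6 : (fun i => ((((DD T : ℤ) ^ n • y' T) i : ℤ) : ℚ)) =
      ((DD T : ℚ) ^ n * DD T) • T.2.2 := by
    rw [← smul_smul, ← e3]
    ext i
    simp
  rw [e4, e5, e6]
  exact (smul_right_injective _ (mul_ne_zero (pow_ne_zero _ hD0) hD0)).eq_iff

end

theorem bounded_search {α : Type*} [Primcodable α] (R : α → ℕ → Prop) (B : α → ℕ)
    (cQ : ComputablePred fun p : α × ℕ => R p.1 p.2) (cB : Computable B)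
    (h : ∀ a n, R a n → ∃ n ≤ B a, R a n) : ComputablePred fun a => ∃ n, R a n := by
  classical
  let P : α → ℕ → Prop := fun a n => R a n ∨ B a ≤ n
  have cQ := cQ.decide
  have cP : ComputablePred fun p : α × ℕ => P p.1 p.2 := by
    refine Computable.computablePred ?_
    have h := Primrec.or.to_comp.comp cQ
      (Primrec.nat_le.decide.to_comp.comp (cB.comp Computable.fst) Computable.snd)
    exact h.of_eq fun p => by simp [P]
  have hex : ∀ T, ∃ n, P T n := fun T => ⟨B T, Or.inr le_rfl⟩
  have cF := Computable.find cP hex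
  have cR : Computable fun T : α => decide (R T (Nat.find (hex T))) :=
    cQ.comp (Computable.id.pair cF)
  refine (Computable.computablePred cR).of_eq fun T => ?_
  constructor
  · intro h; exact ⟨_, h⟩
  · rintro ⟨n, hn⟩
    obtain ⟨n', hn', hq⟩ := h _ n hn
    have hle : Nat.find (hex T) ≤ n' := Nat.find_min' _ (Or.inl hq)
    rcases Nat.find_spec (hex T) with h | h
    · exact h
    · have : Nat.find (hex T) = n' := le_antisymm hle (hn'.trans h)
      rw [this]; exact hq

theorem decidable_of_bound (d : ℕ)
    (hb : ∃ C : ℕ, ∀ (M : Fin d → Fin d → ℤ) (x y : Fin d → ℤ) (D : ℕ), 0 < D → ∀ n : ℕ,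
      ((Matrix.of M) ^ n).mulVec x = (D : ℤ) ^ n • y → ∃ n ≤ HH M x y D ^ C,
        ((Matrix.of M) ^ n).mulVec x = (D : ℤ) ^ n • y) :
    ComputablePred fun T : (Fin d → Fin d → ℚ) × (Fin d → ℚ) × (Fin d → ℚ) =>
      ∃ n : ℕ, ((Matrix.of T.1) ^ n).mulVec T.2.1 = T.2.2 := by
  classical
  obtain ⟨C, hC⟩ := hb
  have key := bounded_search (α := Ty d) Q (fun T => HH (M' T) (x' T) (y' T) (DD T) ^ C)
    cQ.computablePred (comp_powN C cH) (fun T n hn => hC _ _ _ _ (hDpos T) n hn)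
  exact key.of_eq fun T => exists_congr fun n => hQ T n

end OrbitKL

namespace OrbitKL
open Polynomial

theorem ni_step (p0 q b : ℤ[X]) (ℓ : ℕ) (hℓ : ℓ.Prime) (hp : p0.IsPrimitive)
    (hl : (ℓ : ℤ) ∣ p0.leadingCoeff) (δ : ℤ) (n B : ℕ)
    (h : p0 * q = C δ * X ^ n - b) (hb : b.natDegree ≤ B) (hn : B + p0.natDegree ≤ n)
    (hm : 0 < p0.natDegree) :
    ∃ δ' : ℤ, δ = ℓ * δ' ∧ ∃ q' b' : ℤ[X], p0 * q' = C δ' * X ^ n - b' ∧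
      b'.natDegree ≤ B + p0.natDegree := by
  have : Fact ℓ.Prime := ⟨hℓ⟩
  have hp0 : p0 ≠ 0 := by rintro rfl; simp at hm
  have hℓ0 : (ℓ : ℤ) ≠ 0 := by exact_mod_cast hℓ.ne_zero
  -- ℓ divides δ
  have hdvd : (ℓ : ℤ) ∣ δ := by
    by_cases hq : q = 0
    · subst hq
      have := congrArg (fun f => coeff f n) h
      simp [coeff_eq_zero_of_natDegree_lt (show b.natDegree < n by omega)] at this
      simp [← this]
    · have hdeg : (p0 * q).natDegree ≤ n := by
        rw [h]
        exact (natDegree_sub_le _ _).trans (max_le (natDegree_C_mul_X_pow_le _ _) (by omega))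
      rw [natDegree_mul hp0 hq] at hdeg
      have h2 : (p0 * q).coeff (p0.natDegree + (n - p0.natDegree)) =
          p0.coeff p0.natDegree * q.coeff (n - p0.natDegree) :=
        coeff_mul_add_eq_of_natDegree_le le_rfl (by omega)
      rw [show p0.natDegree + (n - p0.natDegree) = n by omega, h] at h2
      simp [coeff_eq_zero_of_natDegree_lt (show b.natDegree < n by omega)] at h2
      rw [h2]
      exact hl.mul_right _
  obtain ⟨δ', rfl⟩ := hdvd
  refine ⟨δ', rfl, ?_⟩
  let φ := Int.castRingHom (ZMod ℓ)
  have hpb : p0.map φ ≠ 0 := by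
    intro hz
    have : C (ℓ : ℤ) ∣ p0 := by
      rw [C_dvd_iff_dvd_coeff]
      intro i
      have := congrArg (fun f => coeff f i) hz
      simpa [φ, ZMod.intCast_zmod_eq_zero_iff_dvd] using this
    have h3 := hp _ this
    rw [Int.isUnit_iff_natAbs_eq] at h3
    simp at h3
    exact hℓ.one_lt.ne' h3
  have hqd : (q.map φ).natDegree ≤ B := by
    have h4 := congrArg (Polynomial.map φ) h
    have : φ ((ℓ : ℤ) * δ') = 0 := by simp [φ]
    rw [Polynomial.map_mul, Polynomial.map_sub, Polynomial.map_mul, map_C, this] at h4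
    simp only [map_zero, zero_mul, zero_sub] at h4
    by_cases hq : q.map φ = 0
    · simp [hq]
    have h5 := congrArg natDegree h4
    rw [natDegree_mul hpb hq, natDegree_neg] at h5
    have := natDegree_map_le (f := φ) (p := b)
    omega
  have hmon : (X ^ (B + 1) : ℤ[X]).Monic := monic_X_pow _
  set lo := q %ₘ X ^ (B + 1) with hlo
  set hi := q /ₘ X ^ (B + 1) with hhi
  have hq : lo + X ^ (B + 1) * hi = q := modByMonic_add_div q _
  have hlod : lo.natDegree ≤ B := by
    have := natDegree_modByMonic_lt q hmon (by
      intro h1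
      have := congrArg natDegree h1
      simp at this)
    simp at this
    omega
  have hdiv : C (ℓ : ℤ) ∣ hi := by
    rw [C_dvd_iff_dvd_coeff]
    intro i
    have h6 : hi.coeff i = q.coeff (i + (B + 1)) := by
      rw [← hq, coeff_add, coeff_X_pow_mul,
        coeff_eq_zero_of_natDegree_lt (show lo.natDegree < _ by omega), zero_add]
    rw [h6, ← ZMod.intCast_zmod_eq_zero_iff_dvd]
    have := coeff_eq_zero_of_natDegree_lt (show (q.map φ).natDegree < i + (B + 1) by omega)
    simpa [φ] using this
  obtain ⟨hi', hhi'⟩ := hdiv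
  -- p0 * (X^(B+1) * hi') * ℓ = ℓ δ' X^n - b - p0 * lo
  have hmain : C (ℓ : ℤ) * (C δ' * X ^ n - p0 * (X ^ (B + 1) * hi')) = b + p0 * lo := by
    have : p0 * (lo + X ^ (B + 1) * (C (ℓ : ℤ) * hi')) = C ((ℓ : ℤ) * δ') * X ^ n - b := by
      rw [← hhi', hq, h]
    rw [C_mul] at this
    linear_combination -this
  refine ⟨X ^ (B + 1) * hi', C δ' * X ^ n - p0 * (X ^ (B + 1) * hi'), by ring, ?_⟩
  rw [← natDegree_C_mul hℓ0, hmain]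
  refine (natDegree_add_le _ _).trans (max_le (by omega) (natDegree_mul_le.trans (by omega)))

theorem ni_main (p0 : ℤ[X]) (ℓ : ℕ) (hℓ : ℓ.Prime) (hp : p0.IsPrimitive)
    (hl : (ℓ : ℤ) ∣ p0.leadingCoeff) (hm : 0 < p0.natDegree) (n k : ℕ) : ∀ (q b : ℤ[X])
    (δ : ℤ) (B : ℕ) (_ : p0 * q = C δ * X ^ n - b) (_ : b.natDegree ≤ B)
    (_ : B + k * p0.natDegree ≤ n), (ℓ : ℤ) ^ k ∣ δ := by
  induction k with
  | zero => simp
  | succ k ih =>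
    intro q b δ B h hb hn
    rw [add_mul, one_mul] at hn
    obtain ⟨δ', rfl, q', b', h', hb'⟩ := ni_step p0 q b ℓ hℓ hp hl δ n B h hb (by omega) hm
    rw [pow_succ']
    exact mul_dvd_mul_left _ (ih q' b' δ' _ h' hb' (by omega))

theorem arch (l : ℂ) (c : ℝ) (hc : 1 < c) (hl : c ≤ ‖l‖) (m n : ℕ) (hmn : m ≤ n) (δ : ℤ)
    (hδ : δ ≠ 0) (b : Fin m → ℤ) (W : ℝ) (hW : ∀ i, |(b i : ℝ)| ≤ W)
    (h : (δ : ℂ) * l ^ n = ∑ i, (b i : ℂ) * l ^ (i : ℕ)) :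
    (n - m : ℕ) * (c - 1) ≤ m * W := by
  have h1 : 1 ≤ ‖l‖ := hc.le.trans hl
  have h2 : ‖l‖ ^ n ≤ m * W * ‖l‖ ^ m := by
    calc ‖l‖ ^ n = 1 * ‖l‖ ^ n := (one_mul _).symm
      _ ≤ |(δ : ℝ)| * ‖l‖ ^ n := by
        gcongr
        exact_mod_cast Int.one_le_abs hδ
      _ = ‖(δ : ℂ) * l ^ n‖ := by simp
      _ = ‖∑ i, (b i : ℂ) * l ^ (i : ℕ)‖ := by rw [h]
      _ ≤ ∑ i : Fin m, W * ‖l‖ ^ m := by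
        refine norm_sum_le_of_le _ fun i _ => ?_
        rw [norm_mul, norm_pow]
        have : ‖(b i : ℂ)‖ ≤ W := by simpa using hW i
        have hW0 : 0 ≤ W := (abs_nonneg _).trans (hW i)
        exact mul_le_mul this (pow_le_pow_right₀ h1 i.2.le) (by positivity) hW0
      _ = m * W * ‖l‖ ^ m := by simp; ring
  have h3 : ‖l‖ ^ (n - m) ≤ m * W := by
    have : ‖l‖ ^ n = ‖l‖ ^ (n - m) * ‖l‖ ^ m := by rw [← pow_add]; congr 1; omega
    rw [this] at h2
    exact le_of_mul_le_mul_right h2 (by positivity)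
  have h4 : c ^ (n - m) ≤ m * W := (pow_le_pow_left₀ (by linarith) hl _).trans h3
  have h5 := one_add_mul_sub_le_pow (a := c) (by linarith) (n - m)
  linarith

theorem kron (d : ℕ) : ∃ c : ℝ, 1 < c ∧ ∃ L : ℕ, 0 < L ∧ ∀ P : ℤ[X], P ≠ 0 → P.natDegree ≤ d →
    |P.leadingCoeff| = 1 →
    (∃ l ∈ P.aroots ℂ, c ≤ ‖l‖) ∨ (∀ l ∈ P.aroots ℂ, l = 0 ∨ l ^ L = 1) := by
  classical
  let mm : ℤ[X] → ℝ := fun p => (p.map (Int.castRingHom ℂ)).mahlerMeasure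
  have hF := finite_mahlerMeasure_le d 2
  set F := hF.toFinset with hFd
  have hFmem : ∀ P : ℤ[X], P ∈ F ↔ P.natDegree ≤ d ∧ mm P ≤ 2 := by
    intro P; simp [hFd, mm]
  -- c0
  obtain ⟨c0, hc0, hc0'⟩ : ∃ c0 : ℝ, 1 < c0 ∧ ∀ P : ℤ[X], P.natDegree ≤ d → 1 < mm P →
      c0 ≤ mm P := by
    let G := (F.filter fun P => 1 < mm P).image mm
    have hne : (insert 2 G).Nonempty := Finset.insert_nonempty _ _
    refine ⟨(insert 2 G).min' hne, ?_, ?_⟩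
    · rw [Finset.lt_min'_iff]
      intro y hy
      rw [Finset.mem_insert] at hy
      rcases hy with rfl | hy
      · norm_num
      · obtain ⟨P, hP, rfl⟩ := Finset.mem_image.1 hy
        exact (Finset.mem_filter.1 hP).2
    · intro P hP h1
      by_cases h2 : mm P ≤ 2
      · apply Finset.min'_le
        exact Finset.mem_insert_of_mem (Finset.mem_image_of_mem _
          (Finset.mem_filter.2 ⟨(hFmem P).2 ⟨hP, h2⟩, h1⟩))
      · exact (Finset.min'_le _ _ (Finset.mem_insert_self _ _)).trans (not_le.1 h2).le
  obtain ⟨c, hc, hcd⟩ : ∃ c : ℝ, 1 < c ∧ c ^ d < c0 := by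
    have hcont : Filter.Tendsto (fun c : ℝ => c ^ d) (nhdsWithin 1 (Set.Ioi 1)) (nhds (1 ^ d)) :=
      (continuous_pow d).continuousAt.tendsto.mono_left nhdsWithin_le_nhds
    rw [one_pow] at hcont
    have h1 := hcont.eventually (gt_mem_nhds hc0)
    obtain ⟨c, h2, h3⟩ := (h1.and self_mem_nhdsWithin).exists
    exact ⟨c, h3, h2⟩
  -- L
  let R : Finset ℂ := (F.filter fun P => mm P = 1).biUnion fun P => (P.aroots ℂ).toFinset
  have hR : ∀ l ∈ R, l ≠ 0 → ∃ n, 0 < n ∧ l ^ n = 1 := by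
    intro l hl h0
    simp only [R, Finset.mem_biUnion, Multiset.mem_toFinset] at hl
    obtain ⟨P, hP, hl⟩ := hl
    exact pow_eq_one_of_mahlerMeasure_eq_one (Finset.mem_filter.1 hP).2 h0 hl
  let o : ℂ → ℕ := fun l => if h : ∃ n, 0 < n ∧ l ^ n = 1 then h.choose else 1
  have ho : ∀ l, 0 < o l := by
    intro l
    simp only [o]
    split_ifs with h
    · exact h.choose_spec.1
    · exact one_pos
  have ho' : ∀ l ∈ R, l ≠ 0 → l ^ (o l) = 1 := by
    intro l hl h0
    have h := hR l hl h0
    simp only [o, dif_pos h]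
    exact h.choose_spec.2
  refine ⟨c, hc, ∏ l ∈ R, o l, Finset.prod_pos fun l _ => ho l, ?_⟩
  intro P hP hd hlc
  have h1 : 1 ≤ mm P := one_le_mahlerMeasure_of_ne_zero hP
  rcases h1.eq_or_lt with h1 | h1
  · right
    intro l hl
    by_cases h0 : l = 0
    · exact Or.inl h0
    right
    have hlR : l ∈ R := by
      simp only [R, Finset.mem_biUnion, Multiset.mem_toFinset]
      exact ⟨P, Finset.mem_filter.2 ⟨(hFmem P).2 ⟨hd, by linarith⟩, h1.symm⟩, hl⟩
    obtain ⟨e, he⟩ := Finset.dvd_prod_of_mem o hlR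
    rw [he, pow_mul, ho' l hlR h0, one_pow]
  · left
    by_contra hcon
    push Not at hcon
    have h2 := hc0' P hd h1
    have h3 : mm P = ‖(P.map (Int.castRingHom ℂ)).leadingCoeff‖ *
      ((P.map (Int.castRingHom ℂ)).roots.map (fun a => max 1 ‖a‖)).prod :=
      mahlerMeasure_eq_leadingCoeff_mul_prod_roots _
    have h4 : ‖(P.map (Int.castRingHom ℂ)).leadingCoeff‖ = 1 := by
      rw [leadingCoeff_map_of_injective (Int.castRingHom ℂ).injective_int]
      simp only [eq_intCast, Complex.norm_intCast]
      exact_mod_cast hlc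
    rw [h4, one_mul] at h3
    have h5 : ((P.map (Int.castRingHom ℂ)).roots.map (fun a => max 1 ‖a‖)).prod ≤
        c ^ Multiset.card (P.map (Int.castRingHom ℂ)).roots := by
      have : ∀ s : Multiset ℂ, (∀ l ∈ s, ‖l‖ < c) →
          (s.map (fun a => max 1 ‖a‖)).prod ≤ c ^ Multiset.card s := by
        intro s
        induction s using Multiset.induction_on with
        | empty => simp
        | cons a s ih =>
          intro hs
          simp only [Multiset.map_cons, Multiset.prod_cons, Multiset.card_cons, pow_succ']
          refine mul_le_mul (max_le hc.le (hs a (by simp)).le)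
            (ih fun l hl => hs l (Multiset.mem_cons_of_mem hl)) ?_ (by linarith)
          refine Multiset.prod_nonneg ?_
          intro y hy
          obtain ⟨z, _, rfl⟩ := Multiset.mem_map.1 hy
          positivity
      exact this _ hcon
    have h6 : Multiset.card (P.map (Int.castRingHom ℂ)).roots ≤ d :=
      (card_roots' _).trans (natDegree_map_le.trans hd)
    have h7 := pow_le_pow_right₀ hc.le h6
    linarith

end OrbitKL

namespace OrbitKL
open Polynomial

/-! ## Krylov matrices -/
section Krylov
variable {d : ℕ} {R S : Type*} [CommRing R] [CommRing S]

/-- scaled Krylov matrix -/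
def Kmat (M : Matrix (Fin d) (Fin d) R) (x : Fin d → R) (D : R) (m : ℕ) :
    Matrix (Fin d) (Fin m) R :=
  Matrix.of fun r i => D ^ (d - (i : ℕ)) * ((M ^ (i : ℕ)).mulVec x) r

/-- Gram determinant -/
def dlt (M : Matrix (Fin d) (Fin d) R) (x : Fin d → R) (D : R) (m : ℕ) : R :=
  ((Kmat M x D m).transpose * Kmat M x D m).det

/-- Cramer numerators -/
def bvec (M : Matrix (Fin d) (Fin d) R) (x y : Fin d → R) (D : R) (m : ℕ) : Fin m → R :=
  ((Kmat M x D m).transpose * Kmat M x D m).adjugate.mulVec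
    ((Kmat M x D m).transpose.mulVec (D ^ d • y))

/-- numerator for the quasi-unipotent case -/
def evec (M : Matrix (Fin d) (Fin d) R) (x y : Fin d → R) (D : R) (L r k : ℕ) : Fin d → R :=
  D ^ L • ((M ^ L - (D ^ L) • 1) ^ k).mulVec (D ^ r • y - (M ^ r).mulVec x)

variable (f : R →+* S)

theorem map_mulVec' {m n : ℕ} (M : Matrix (Fin m) (Fin n) R) (v : Fin n → R) :
    (M.map f).mulVec (f ∘ v) = f ∘ (M.mulVec v) := by
  ext i; exact (RingHom.map_mulVec f M v i).symm

theorem smul_comp' {m : ℕ} (c : R) (v : Fin m → R) : f c • (f ∘ v) = f ∘ (c • v) := by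
  ext i; simp

theorem Kmat_map (M : Matrix (Fin d) (Fin d) R) (x : Fin d → R) (D : R) (m : ℕ) :
    Kmat (M.map f) (f ∘ x) (f D) m = (Kmat M x D m).map f := by
  ext r i
  simp only [Kmat, Matrix.of_apply, Matrix.map_apply, map_mul, map_pow]
  rw [← Matrix.map_pow, map_mulVec']
  rfl

theorem dlt_map (M : Matrix (Fin d) (Fin d) R) (x : Fin d → R) (D : R) (m : ℕ) :
    dlt (M.map f) (f ∘ x) (f D) m = f (dlt M x D m) := by
  simp only [dlt, Kmat_map]
  rw [RingHom.map_det, RingHom.mapMatrix_apply, Matrix.map_mul, Matrix.transpose_map]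

theorem bvec_map (M : Matrix (Fin d) (Fin d) R) (x y : Fin d → R) (D : R) (m : ℕ) :
    bvec (M.map f) (f ∘ x) (f ∘ y) (f D) m = f ∘ (bvec M x y D m) := by
  simp only [bvec, Kmat_map]
  rw [← map_pow, smul_comp', ← Matrix.transpose_map, map_mulVec', ← Matrix.map_mul,
    ← RingHom.mapMatrix_apply, ← RingHom.map_adjugate, RingHom.mapMatrix_apply, map_mulVec']

theorem evec_map (M : Matrix (Fin d) (Fin d) R) (x y : Fin d → R) (D : R) (L r k : ℕ) :
    evec (M.map f) (f ∘ x) (f ∘ y) (f D) L r k = f ∘ (evec M x y D L r k) := by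
  simp only [evec]
  have h1 : (M.map f) ^ L - (f D) ^ L • 1 = (M ^ L - (D ^ L) • (1 : Matrix _ _ R)).map f := by
    rw [Matrix.map_sub _ (map_sub f), Matrix.map_pow]
    congr 1
    ext i j
    simp [Matrix.one_apply, apply_ite f]
  have h2 : (f D) ^ r • (f ∘ y) - ((M.map f) ^ r).mulVec (f ∘ x) =
      f ∘ (D ^ r • y - (M ^ r).mulVec x) := by
    rw [← map_pow, smul_comp', ← Matrix.map_pow, map_mulVec']
    ext i; simp
  rw [h1, h2, ← Matrix.map_pow, map_mulVec', ← map_pow, smul_comp']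

end Krylov

theorem minp {d : ℕ} (M : Matrix (Fin d) (Fin d) ℚ) (x : Fin d → ℚ) :
    ∃ p : ℚ[X], p.Monic ∧ p.natDegree ≤ d ∧ (aeval M p).mulVec x = 0 ∧
      ∀ f : ℚ[X], (aeval M f).mulVec x = 0 → f.degree < p.degree → f = 0 := by
  classical
  let P : ℕ → Prop := fun k => ∃ p : ℚ[X], p.Monic ∧ p.natDegree = k ∧ (aeval M p).mulVec x = 0
  have hex : ∃ k, P k := ⟨_, M.charpoly, M.charpoly_monic, rfl, by
    rw [Matrix.aeval_self_charpoly, Matrix.zero_mulVec]⟩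
  obtain ⟨p, hp, hd, h0⟩ := Nat.find_spec hex
  refine ⟨p, hp, ?_, h0, ?_⟩
  · rw [hd]
    refine Nat.find_min' hex ⟨M.charpoly, M.charpoly_monic, ?_, ?_⟩
    · simp
    · rw [Matrix.aeval_self_charpoly, Matrix.zero_mulVec]
  · intro f hf hlt
    by_contra hne
    refine Nat.find_min hex (m := f.natDegree) ?_ ⟨C f.leadingCoeff⁻¹ * f, ?_, ?_, ?_⟩
    · rw [← hd]
      exact natDegree_lt_natDegree hne hlt
    · rw [mul_comm]; exact monic_mul_leadingCoeff_inv hne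
    · exact natDegree_C_mul (inv_ne_zero (leadingCoeff_ne_zero.2 hne))
    · rw [map_mul, ← Matrix.mulVec_mulVec, hf, Matrix.mulVec_zero]

theorem aeval_sum_mulVec {d m : ℕ} (M : Matrix (Fin d) (Fin d) ℚ) (x : Fin d → ℚ)
    (a : Fin m → ℚ) : (aeval M (∑ i, C (a i) * X ^ (i : ℕ))).mulVec x =
      ∑ i, a i • (M ^ (i : ℕ)).mulVec x := by
  rw [map_sum, Matrix.sum_mulVec]
  refine Finset.sum_congr rfl fun i _ => ?_
  rw [map_mul, aeval_C, map_pow, aeval_X, Algebra.algebraMap_eq_smul_one, smul_mul_assoc, one_mul,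
    Matrix.smul_mulVec]

theorem Kmat_mulVec {d m : ℕ} (hm : m ≤ d) (M : Matrix (Fin d) (Fin d) ℚ) (x : Fin d → ℚ) (D : ℚ)
    (a : Fin m → ℚ) : (Kmat (D • M) x D m).mulVec a =
      D ^ d • (aeval M (∑ i, C (a i) * X ^ (i : ℕ))).mulVec x := by
  rw [aeval_sum_mulVec]
  ext r
  simp only [Matrix.mulVec, dotProduct, Kmat, Matrix.of_apply, Pi.smul_apply, Finset.sum_apply,
    smul_eq_mul, Finset.mul_sum, _root_.smul_pow, Matrix.smul_apply, Finset.sum_mul]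
  refine Finset.sum_congr rfl fun i _ => Finset.sum_congr rfl fun j _ => ?_
  have : D ^ d = D ^ (d - (i : ℕ)) * D ^ (i : ℕ) := by
    rw [← pow_add]; congr 1; have := i.2; omega
  rw [this]; ring

theorem core {d : ℕ} (M : Matrix (Fin d) (Fin d) ℚ) (x y : Fin d → ℚ) (D : ℚ) (hD : D ≠ 0)
    (p : ℚ[X]) (hp : p.Monic) (hpd : p.natDegree ≤ d) (hp0 : (aeval M p).mulVec x = 0)
    (hmin : ∀ f : ℚ[X], (aeval M f).mulVec x = 0 → f.degree < p.degree → f = 0)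
    (n : ℕ) (hn : (M ^ n).mulVec x = y) :
    dlt (D • M) x D p.natDegree ≠ 0 ∧
    p ∣ C (dlt (D • M) x D p.natDegree) * X ^ n -
      ∑ i, C (bvec (D • M) x y D p.natDegree i) * X ^ (i : ℕ) := by
  set m := p.natDegree with hm
  set K := Kmat (D • M) x D m with hK
  have hdlt : dlt (D • M) x D m = (K.transpose * K).det := rfl
  have hsumdeg : ∀ a : Fin m → ℚ, (∑ i, C (a i) * X ^ (i : ℕ) : ℚ[X]).degree < p.degree := by
    intro a
    rw [degree_eq_natDegree hp.ne_zero]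
    refine (degree_sum_le _ _).trans_lt ?_
    rw [Finset.sup_lt_iff (WithBot.bot_lt_coe _)]
    intro i _
    exact (degree_C_mul_X_pow_le _ _).trans_lt (by exact_mod_cast i.2)
  have hcoeff : ∀ (a : Fin m → ℚ) (j : Fin m),
      (∑ i, C (a i) * X ^ (i : ℕ) : ℚ[X]).coeff j = a j := by
    intro a j
    rw [finsetSum_coeff, Finset.sum_eq_single j]
    · simp
    · intro i _ hij
      rw [coeff_C_mul_X_pow, if_neg]
      intro h; exact hij (Fin.ext h).symm
    · simp
  have hinj : ∀ a : Fin m → ℚ, K.mulVec a = 0 → a = 0 := by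
    intro a ha
    rw [hK, Kmat_mulVec hpd, smul_eq_zero_iff_right (pow_ne_zero _ hD)] at ha
    have := hmin _ ha (hsumdeg a)
    ext j
    rw [← hcoeff a j, this]; simp
  have hdet : (K.transpose * K).det ≠ 0 := by
    intro h0
    obtain ⟨v, hv, hv0⟩ := Matrix.exists_mulVec_eq_zero_iff.2 h0
    apply hv
    apply hinj
    have h1 : dotProduct (K.mulVec v) (K.mulVec v) = 0 := by
      have := congrArg (dotProduct v) hv0
      rw [dotProduct_zero, ← Matrix.mulVec_mulVec, Matrix.dotProduct_mulVec,
        Matrix.vecMul_transpose] at this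
      exact this
    exact dotProduct_self_eq_zero.1 h1
  refine ⟨hdet, ?_⟩
  let a : Fin m → ℚ := fun i => (X ^ n %ₘ p).coeff i
  have ha : X ^ n %ₘ p = ∑ i, C (a i) * X ^ (i : ℕ) := by
    ext j
    by_cases hj : j < m
    · exact (hcoeff a ⟨j, hj⟩).symm
    · have hdg : (p.degree : WithBot ℕ) ≤ j := by
        rw [degree_eq_natDegree hp.ne_zero]; exact_mod_cast not_lt.1 hj
      rw [coeff_eq_zero_of_degree_lt ((degree_modByMonic_lt _ hp).trans_le hdg),
        coeff_eq_zero_of_degree_lt ((hsumdeg a).trans_le hdg)]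
  have hmd : X ^ n %ₘ p + p * (X ^ n /ₘ p) = X ^ n := modByMonic_add_div _ _
  have hKa : K.mulVec a = D ^ d • y := by
    rw [hK, Kmat_mulVec hpd, ← ha, ← hn]
    congr 1
    have h1 : (aeval M (X ^ n : ℚ[X])).mulVec x = (M ^ n).mulVec x := by
      rw [map_pow, aeval_X]
    rw [← h1, ← hmd, map_add, Matrix.add_mulVec, mul_comm p, map_mul, ← Matrix.mulVec_mulVec, hp0,
      Matrix.mulVec_zero, add_zero]
    simp only [mul_comm _ p, hmd]
  have hb : bvec (D • M) x y D m = (K.transpose * K).det • a := by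
    have : bvec (D • M) x y D m = (K.transpose * K).adjugate.mulVec
      (K.transpose.mulVec (D ^ d • y)) := rfl
    rw [this, ← hKa, Matrix.mulVec_mulVec, Matrix.mulVec_mulVec, Matrix.mul_assoc,
      Matrix.adjugate_mul, Matrix.smul_mulVec, Matrix.one_mulVec]
  have hfin : C (dlt (D • M) x D m) * X ^ n -
      ∑ i, C (bvec (D • M) x y D m i) * X ^ (i : ℕ) =
      p * (C ((K.transpose * K).det) * (X ^ n /ₘ p)) := by
    rw [hb, hdlt]
    have : ∑ i, C (((K.transpose * K).det • a) i) * X ^ (i : ℕ) =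
        C ((K.transpose * K).det) * (X ^ n %ₘ p) := by
      rw [ha, Finset.mul_sum]
      refine Finset.sum_congr rfl fun i _ => ?_
      rw [Pi.smul_apply, smul_eq_mul, C_mul, mul_assoc]
    rw [this]
    linear_combination (-C ((K.transpose * K).det)) * hmd
  rw [hfin]
  exact dvd_mul_right _ _

end OrbitKL
namespace OrbitKL
open Polynomial

/-- polynomially bounded families -/
def PB {I : Type} (h : I → ℕ) (hh : ∀ T, 2 ≤ h T) : Subring (I → ℤ) where
  carrier := {f | ∃ C : ℕ, ∀ T, |f T| ≤ (h T : ℤ) ^ C}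
  mul_mem' := by
    rintro a b ⟨A, hA⟩ ⟨B, hB⟩
    refine ⟨A + B, fun T => ?_⟩
    rw [Pi.mul_apply, abs_mul, pow_add]
    exact mul_le_mul (hA T) (hB T) (abs_nonneg _) (by positivity)
  one_mem' := ⟨0, fun T => by simp⟩
  add_mem' := by
    rintro a b ⟨A, hA⟩ ⟨B, hB⟩
    refine ⟨max A B + 1, fun T => ?_⟩
    have h2 : (2 : ℤ) ≤ h T := by exact_mod_cast hh T
    have h1 : (1 : ℤ) ≤ h T := by linarith
    have e1 := (hA T).trans (pow_le_pow_right₀ h1 (le_max_left A B))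
    have e2 := (hB T).trans (pow_le_pow_right₀ h1 (le_max_right A B))
    rw [Pi.add_apply, pow_succ]
    have e3 := abs_add_le (a T) (b T)
    have e4 : (0 : ℤ) ≤ (h T : ℤ) ^ max A B := by positivity
    nlinarith
  zero_mem' := ⟨0, fun T => by simp⟩
  neg_mem' := by
    rintro a ⟨A, hA⟩
    exact ⟨A, fun T => by rw [Pi.neg_apply, abs_neg]; exact hA T⟩

/-- instances -/
abbrev Inst (d : ℕ) := (Fin d → Fin d → ℤ) × (Fin d → ℤ) × (Fin d → ℤ) × ℕ

/-- their size -/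
def hI {d : ℕ} (T : Inst d) : ℕ := HH T.1 T.2.1 T.2.2.1 T.2.2.2

theorem two_le_HH {d} (M : Fin d → Fin d → ℤ) (x y : Fin d → ℤ) (D : ℕ) : 2 ≤ HH M x y D := by
  unfold HH; omega

theorem two_le_hI {d : ℕ} (T : Inst d) : 2 ≤ hI T := two_le_HH _ _ _ _

/-- the ring -/
abbrev RR (d : ℕ) := ↥(PB (hI (d := d)) two_le_hI)

theorem memPB_of {d : ℕ} (f : Inst d → ℤ) (hf : ∀ T, (f T).natAbs ≤ hI T) :
    f ∈ PB (hI (d := d)) two_le_hI :=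
  ⟨1, fun T => by rw [pow_one, Int.abs_eq_natAbs]; exact_mod_cast hf T⟩

/-- generic matrix -/
def gM (d : ℕ) : Matrix (Fin d) (Fin d) (RR d) := Matrix.of fun i j =>
  ⟨fun T => T.1 i j, memPB_of _ fun T => by
    have h1 : (T.1 i j).natAbs ≤ ∑ j, (T.1 i j).natAbs :=
      Finset.single_le_sum (f := fun j => (T.1 i j).natAbs) (fun _ _ => Nat.zero_le _) (Finset.mem_univ j)
    have h2 : ∑ j, (T.1 i j).natAbs ≤ ∑ i, ∑ j, (T.1 i j).natAbs :=
      Finset.single_le_sum (f := fun i => ∑ j, (T.1 i j).natAbs) (fun _ _ => Nat.zero_le _) (Finset.mem_univ i)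
    unfold hI HH; omega⟩

/-- generic x -/
def gx (d : ℕ) : Fin d → RR d := fun i =>
  ⟨fun T => T.2.1 i, memPB_of _ fun T => by
    have h1 : (T.2.1 i).natAbs ≤ ∑ j, (T.2.1 j).natAbs :=
      Finset.single_le_sum (f := fun j => (T.2.1 j).natAbs) (fun _ _ => Nat.zero_le _) (Finset.mem_univ i)
    unfold hI HH; omega⟩

/-- generic y -/
def gy (d : ℕ) : Fin d → RR d := fun i =>
  ⟨fun T => T.2.2.1 i, memPB_of _ fun T => by
    have h1 : (T.2.2.1 i).natAbs ≤ ∑ j, (T.2.2.1 j).natAbs :=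
      Finset.single_le_sum (f := fun j => (T.2.2.1 j).natAbs) (fun _ _ => Nat.zero_le _) (Finset.mem_univ i)
    unfold hI HH; omega⟩

/-- generic D -/
def gD (d : ℕ) : RR d :=
  ⟨fun T => (T.2.2.2 : ℤ), memPB_of _ fun T => by
    rw [Int.natAbs_natCast]; unfold hI HH; omega⟩

/-- evaluation -/
def evT {d : ℕ} (T : Inst d) : RR d →+* ℤ :=
  (Pi.evalRingHom (fun _ : Inst d => ℤ) T).comp (PB (hI (d := d)) two_le_hI).subtype

theorem evT_gM {d : ℕ} (T : Inst d) : (gM d).map (evT T) = Matrix.of T.1 := rfl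
theorem evT_gx {d : ℕ} (T : Inst d) : evT T ∘ gx d = T.2.1 := rfl
theorem evT_gy {d : ℕ} (T : Inst d) : evT T ∘ gy d = T.2.2.1 := rfl
theorem evT_gD {d : ℕ} (T : Inst d) : evT T (gD d) = (T.2.2.2 : ℤ) := rfl

theorem fin_bd {d : ℕ} {J : Type} [Fintype J] (F : J → RR d) :
    ∃ C : ℕ, ∀ j T, |evT T (F j)| ≤ (hI T : ℤ) ^ C := by
  choose C hC using fun j => (F j).2
  refine ⟨∑ j, C j, fun j T => (hC j T).trans ?_⟩
  have h2 : (2 : ℤ) ≤ hI T := by exact_mod_cast two_le_hI T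
  exact pow_le_pow_right₀ (by linarith)
    (Finset.single_le_sum (f := C) (fun _ _ => Nat.zero_le _) (Finset.mem_univ j))

theorem pb_all (d L : ℕ) : ∃ C : ℕ, ∀ (M : Fin d → Fin d → ℤ) (x y : Fin d → ℤ) (D : ℕ),
    (∀ m ≤ d, |dlt (Matrix.of M) x (D : ℤ) m| ≤ (HH M x y D : ℤ) ^ C) ∧
    (∀ m ≤ d, ∀ i, |bvec (Matrix.of M) x y (D : ℤ) m i| ≤ (HH M x y D : ℤ) ^ C) ∧
    (∀ r < d + L, ∀ k < d, ∀ i, |evec (Matrix.of M) x y (D : ℤ) L r k i| ≤ (HH M x y D : ℤ) ^ C) := by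
  obtain ⟨C1, h1⟩ := fin_bd (fun m : Fin (d + 1) => dlt (gM d) (gx d) (gD d) m)
  obtain ⟨C2, h2⟩ := fin_bd (fun m : (Σ m : Fin (d + 1), Fin m) =>
    bvec (gM d) (gx d) (gy d) (gD d) m.1 m.2)
  obtain ⟨C3, h3⟩ := fin_bd (fun m : Fin (d + L) × Fin d × Fin d =>
    evec (gM d) (gx d) (gy d) (gD d) L m.1 m.2.1 m.2.2)
  refine ⟨C1 + C2 + C3, fun M x y D => ?_⟩
  have hh : (2 : ℤ) ≤ HH M x y D := by exact_mod_cast two_le_HH M x y D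
  have hm : ∀ {a : ℤ} {c : ℕ}, a ≤ (HH M x y D : ℤ) ^ c → c ≤ C1 + C2 + C3 →
      a ≤ (HH M x y D : ℤ) ^ (C1 + C2 + C3) := fun h h' =>
    h.trans (pow_le_pow_right₀ (by linarith) h')
  refine ⟨fun m hmd => ?_, fun m hmd i => ?_, fun r hr k hk i => ?_⟩
  · have := h1 ⟨m, by omega⟩ (M, x, y, D)
    rw [← dlt_map, evT_gM, evT_gx, evT_gD] at this
    exact hm this (by omega)
  · have := h2 ⟨⟨m, by omega⟩, i⟩ (M, x, y, D)
    have e := congrFun (bvec_map (evT (M, x, y, D)) (gM d) (gx d) (gy d) (gD d) m) i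
    rw [evT_gM, evT_gx, evT_gy, evT_gD] at e
    rw [e]
    exact hm this (by omega)
  · have := h3 ⟨⟨r, by omega⟩, ⟨k, by omega⟩, i⟩ (M, x, y, D)
    have e := congrFun (evec_map (evT (M, x, y, D)) (gM d) (gx d) (gy d) (gD d) L r k) i
    rw [evT_gM, evT_gx, evT_gy, evT_gD] at e
    rw [e]
    exact hm this (by omega)

end OrbitKL

namespace OrbitKL
open Polynomial

theorem unip {d : ℕ} (N : Matrix (Fin d) (Fin d) ℤ) (c : ℤ) (v : Fin d → ℤ)
    (h : N.mulVec (N.mulVec v) = 0) (q : ℕ) :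
    c • ((N + c • 1) ^ q).mulVec v = c ^ q • (c • v + (q : ℤ) • N.mulVec v) := by
  induction q with
  | zero => simp
  | succ q ih =>
    rw [pow_succ', ← Matrix.mulVec_mulVec, ← Matrix.mulVec_smul, ih, Matrix.mulVec_smul,
      Matrix.add_mulVec, Matrix.mulVec_add, Matrix.mulVec_smul, Matrix.mulVec_smul, h,
      Matrix.smul_mulVec, Matrix.one_mulVec]
    ext i
    simp only [Pi.smul_apply, Pi.add_apply, smul_eq_mul, Pi.zero_apply]
    push_cast
    ring

theorem quasi2 {d : ℕ} (A : Matrix (Fin d) (Fin d) ℤ) (x y : Fin d → ℤ) (D : ℤ) (hD : D ≠ 0)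
    (L : ℕ) (hL : 0 < L) (W : ℕ)
    (hW : ∀ r < d + L, ∀ k < d, ∀ i, |evec A x y D L r k i| ≤ (W : ℤ))
    (h0 : ((A ^ L - D ^ L • 1) ^ d).mulVec ((A ^ d).mulVec x) = 0)
    (n : ℕ) (hn : (A ^ n).mulVec x = D ^ n • y) :
    ∃ n' ≤ d + L + L * W, (A ^ n').mulVec x = D ^ n' • y := by
  by_cases hnd : n < d + L
  · exact ⟨n, by nlinarith [Nat.zero_le (L * W)], hn⟩
  push Not at hnd
  set N := A ^ L - D ^ L • (1 : Matrix (Fin d) (Fin d) ℤ) with hN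
  have hAL : A ^ L = N + D ^ L • 1 := by rw [hN]; abel
  have hcomm : Commute N A := by
    rw [hN]
    exact ((Commute.refl A).pow_left L).sub_left ((Commute.one_left A).smul_left _)
  obtain ⟨r, q, hr1, hr2, hrq⟩ : ∃ r q, d ≤ r ∧ r < d + L ∧ n = L * q + r := by
    refine ⟨d + (n - d) % L, (n - d) / L, by omega, ?_, ?_⟩
    · have := Nat.mod_lt (n - d) hL; omega
    · have := Nat.div_add_mod (n - d) L; omega
  set z := (A ^ r).mulVec x with hz
  have hNz : (N ^ d).mulVec z = 0 := by
    have : A ^ r = A ^ (r - d) * A ^ d := by rw [← pow_add]; congr 1; omega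
    rw [hz, this, ← Matrix.mulVec_mulVec, Matrix.mulVec_mulVec, 
      (hcomm.pow_pow d (r - d)).eq, ← Matrix.mulVec_mulVec, h0, Matrix.mulVec_zero]
  have hq : ((N + D ^ L • 1) ^ q).mulVec z = D ^ n • y := by
    rw [← hAL, hz, Matrix.mulVec_mulVec, ← pow_mul, ← pow_add, ← hrq, hn]
  classical
  have hex : ∃ k, (N ^ k).mulVec z = 0 := ⟨d, hNz⟩
  have hkd : Nat.find hex ≤ d := Nat.find_min' hex hNz
  have hk := Nat.find_spec hex
  have hkm : ∀ {j}, j < Nat.find hex → (N ^ j).mulVec z ≠ 0 := fun h => Nat.find_min hex h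
  set k := Nat.find hex with hkdef
  have hDL : D ^ L ≠ 0 := pow_ne_zero _ hD
  have hDLq : (D ^ L) ^ q ≠ 0 := pow_ne_zero _ hDL
  have hDn : D ^ n = (D ^ L) ^ q * D ^ r := by rw [← pow_mul, ← pow_add, hrq]
  -- small index works
  have small : N.mulVec z = 0 → ∃ n' ≤ d + L + L * W, (A ^ n').mulVec x = D ^ n' • y := by
    intro h1
    refine ⟨r, by nlinarith [Nat.zero_le (L * W)], ?_⟩
    have := unip N (D ^ L) z (by rw [h1, Matrix.mulVec_zero]) q
    rw [hq, h1, smul_zero, add_zero, smul_comm ((D ^ L) ^ q), hDn, mul_smul] at this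
    exact (smul_right_injective _ hDLq (smul_right_injective _ hDL this)).symm
  obtain hk0 | hk1 | ⟨j, hj⟩ : k = 0 ∨ k = 1 ∨ ∃ j, k = j + 2 := by
    rcases k with _ | _ | j
    · simp
    · simp
    · right; right; exact ⟨j, rfl⟩
  · apply small
    rw [hk0, pow_zero, Matrix.one_mulVec] at hk
    rw [hk, Matrix.mulVec_zero]
  · apply small
    rwa [hk1, pow_one] at hk
  · have hne : (N ^ (j + 1)).mulVec z ≠ 0 := hkm (by omega)
    have hv : N.mulVec (N.mulVec ((N ^ j).mulVec z)) = 0 := by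
      rw [Matrix.mulVec_mulVec, Matrix.mulVec_mulVec, ← pow_two, ← pow_add]
      rw [hj, add_comm] at hk
      exact hk
    have hu := unip N (D ^ L) _ hv q
    have hc2 : ((N + D ^ L • 1) ^ q).mulVec ((N ^ j).mulVec z) = (N ^ j).mulVec (D ^ n • y) := by
      rw [← hq]
      rw [Matrix.mulVec_mulVec z, Matrix.mulVec_mulVec z]
      congr 1
      refine Commute.eq (Commute.pow_pow ?_ _ _)
      exact (Commute.refl N).add_left ((Commute.one_left N).smul_left _)
    rw [hc2, Matrix.mulVec_mulVec z N, ← pow_succ'] at hu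
    have he : (q : ℤ) • (N ^ (j + 1)).mulVec z = evec A x y D L r j := by
      refine smul_right_injective _ hDLq ?_
      simp only [evec]
      rw [← hN, ← hz, Matrix.mulVec_sub, Matrix.mulVec_smul]
      rw [Matrix.mulVec_smul, hDn] at hu
      ext i
      have := congrFun hu i
      simp only [Pi.smul_apply, Pi.add_apply, Pi.sub_apply, smul_eq_mul] at this ⊢
      linear_combination -this
    obtain ⟨i, hi⟩ := Function.ne_iff.1 hne
    have hb := hW r hr2 j (by omega) i
    rw [← he, Pi.smul_apply, smul_eq_mul, abs_mul, Nat.abs_cast] at hb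
    have h1 : 1 ≤ |((N ^ (j + 1)).mulVec z) i| := Int.one_le_abs hi
    have hqW : q ≤ W := by
      have : (q : ℤ) ≤ W := by nlinarith
      exact_mod_cast this
    exact ⟨n, by rw [hrq]; nlinarith [Nat.mul_le_mul_left L hqW], hn⟩

theorem prim {p : ℚ[X]} (hp : p.Monic) : ∃ p0 : ℤ[X], p0.IsPrimitive ∧
    p0.natDegree = p.natDegree ∧ ∃ a : ℚ, a ≠ 0 ∧ p0.map (Int.castRingHom ℚ) = C a * p := by
  obtain ⟨b, hbm, hb⟩ := IsLocalization.integerNormalization_spec (nonZeroDivisors ℤ) p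
  have hb0 : b ≠ 0 := nonZeroDivisors.ne_zero hbm
  set g := IsLocalization.integerNormalization (nonZeroDivisors ℤ) p with hg
  have hg0 : g ≠ 0 := by
    intro h
    rw [h, Polynomial.map_zero] at hb
    exact (smul_ne_zero hb0 hp.ne_zero) hb.symm
  have hc : (g.content : ℚ) ≠ 0 := by
    exact_mod_cast fun h => hg0 (content_eq_zero_iff.1 h)
  have hmap : g.primPart.map (Int.castRingHom ℚ) = C ((g.content : ℚ)⁻¹ * ((b : ℤ) : ℚ)) * p := by
    have h1 := congrArg (Polynomial.map (Int.castRingHom ℚ)) g.eq_C_content_mul_primPart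
    rw [Polynomial.map_mul, map_C] at h1
    have h2 : g.map (Int.castRingHom ℚ) = C ((b : ℤ) : ℚ) * p := by
      have : algebraMap ℤ ℚ = Int.castRingHom ℚ := rfl
      rw [← this, hb, ← smul_eq_C_mul, Int.cast_smul_eq_zsmul]
    rw [C_mul, mul_assoc, ← h2, h1, ← mul_assoc, eq_intCast, ← C_mul, inv_mul_cancel₀ hc, C_1, one_mul]
  have ha : (g.content : ℚ)⁻¹ * ((b : ℤ) : ℚ) ≠ 0 :=
    mul_ne_zero (inv_ne_zero hc) (by exact_mod_cast hb0)
  refine ⟨g.primPart, g.isPrimitive_primPart, ?_, _, ha, hmap⟩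
  have := congrArg natDegree hmap
  rwa [natDegree_map_eq_of_injective (RingHom.injective_int _), natDegree_C_mul ha] at this

theorem quasi1 {d L : ℕ} {p : ℚ[X]} (hp : p.Monic) (hd : p.natDegree ≤ d)
    (h : ∀ l : ℂ, aeval l p = 0 → l = 0 ∨ l ^ L = 1) : p ∣ (X * (X ^ L - 1)) ^ d := by
  rw [← Polynomial.map_dvd_map' (algebraMap ℚ ℂ)]
  set P := p.map (algebraMap ℚ ℂ) with hP
  have hs : P.Splits := IsAlgClosed.splits P
  have hPm : P.Monic := hp.map _
  have hcard : Multiset.card P.roots = p.natDegree := by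
    rw [← hs.natDegree_eq_card_roots, hP, natDegree_map]
  have h1 : (P.roots.map (fun a => X - C a)).prod ∣
      (P.roots.map (fun _ => (X * (X ^ L - 1) : ℂ[X]))).prod := by
    apply Multiset.prod_dvd_prod_of_dvd
    intro a ha
    rw [dvd_iff_isRoot, IsRoot]
    have : aeval a p = 0 := by
      have := isRoot_of_mem_roots ha
      rwa [IsRoot, hP, eval_map_algebraMap] at this
    rcases h a this with h | h
    · simp [h]
    · simp [h]
  rw [Multiset.map_const', Multiset.prod_replicate, hcard] at h1
  have h2 : P = (P.roots.map (fun a => X - C a)).prod := hs.eq_prod_roots_of_monic hPm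
  rw [h2]
  simp only [Polynomial.map_pow, Polynomial.map_mul, Polynomial.map_X, Polynomial.map_sub, Polynomial.map_one]
  exact h1.trans (pow_dvd_pow _ hd)

theorem case_poly {d L : ℕ} {c : ℝ} (hc : 1 < c)
    (hk : ∀ P : ℤ[X], P ≠ 0 → P.natDegree ≤ d → |P.leadingCoeff| = 1 →
      (∃ l ∈ P.aroots ℂ, c ≤ ‖l‖) ∨ (∀ l ∈ P.aroots ℂ, l = 0 ∨ l ^ L = 1))
    (K : ℕ) (hK : 1 / (c - 1) ≤ K)
    (p0 : ℤ[X]) (hp : p0.IsPrimitive) (m : ℕ) (hpm : p0.natDegree = m) (hm0 : 0 < m) (hmd : m ≤ d)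
    (δ : ℤ) (hδ : δ ≠ 0) (b : Fin m → ℤ) (n W : ℕ) (hW : |δ| ≤ W) (hb : ∀ i, |b i| ≤ W)
    (hdvd : p0 ∣ C δ * X ^ n - ∑ i, C (b i) * X ^ (i : ℕ)) :
    n ≤ d * (K + 2) * (W + 1) ∨ ∀ l ∈ p0.aroots ℂ, l = 0 ∨ l ^ L = 1 := by
  obtain ⟨q, hq⟩ := hdvd
  by_cases hnm : n < m
  · left
    have : d ≤ d * ((K + 2) * (W + 1)) := Nat.le_mul_of_pos_right _ (by positivity)
    rw [mul_assoc]; omega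
  push Not at hnm
  by_cases hlc : |p0.leadingCoeff| = 1
  · rcases hk p0 hp.ne_zero (by omega) hlc with ⟨l, hl, hcl⟩ | h
    · left
      have hroot : aeval l p0 = 0 := (mem_aroots.1 hl).2
      have he := congrArg (aeval l) hq
      rw [map_mul, hroot, zero_mul] at he
      simp only [map_sub, map_mul, map_sum, map_pow, aeval_X, eq_intCast, map_intCast] at he
      have := arch l c hc hcl m n hnm δ hδ b W (fun i => by exact_mod_cast hb i) (sub_eq_zero.1 he)
      have hc1 : 0 < c - 1 := by linarith
      have h3 : ((n - m : ℕ) : ℝ) ≤ m * W * K := by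
        rw [← le_div_iff₀ hc1] at this
        refine this.trans ?_
        rw [div_eq_mul_one_div]
        gcongr
      have h4 : n - m ≤ m * W * K := by exact_mod_cast h3
      have h5 : m * W * K ≤ d * W * K := by gcongr
      have h6 : d * (K + 2) * (W + 1) = d * W * K + d + (d * K + 2 * d * W + d) := by ring
      omega
    · exact Or.inr h
  · left
    have hna : p0.leadingCoeff.natAbs ≠ 1 := by
      intro h; apply hlc; rw [Int.abs_eq_natAbs, h]; rfl
    obtain ⟨ℓ, hℓ, hdv⟩ := Nat.exists_prime_and_dvd hna
    have hl : (ℓ : ℤ) ∣ p0.leadingCoeff := Int.natCast_dvd.2 hdv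
    have hbdeg : (∑ i, C (b i) * X ^ (i : ℕ) : ℤ[X]).natDegree ≤ m := by
      refine natDegree_sum_le_of_forall_le _ _ fun i _ => ?_
      exact (natDegree_C_mul_X_pow_le _ _).trans i.2.le
    have := ni_main p0 ℓ hℓ hp hl (by omega) n ((n - m) / m) q _ δ m hq.symm hbdeg (by
      rw [hpm]
      have := Nat.div_mul_le_self (n - m) m
      omega)
    set k := (n - m) / m with hkd
    have h1 : (ℓ : ℤ) ^ k ≤ |δ| := Int.le_of_dvd (abs_pos.2 hδ) ((dvd_abs _ _).2 this)
    have h2 : ℓ ^ k ≤ W := by exact_mod_cast h1.trans hW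
    have h3 : k < ℓ ^ k := Nat.lt_pow_self hℓ.one_lt
    have h4 : n - m < m * (k + 1) := by
      have := Nat.lt_mul_div_succ (n - m) hm0
      exact this
    have h5 : m * (k + 1) ≤ d * (W + 1) := Nat.mul_le_mul hmd (by omega)
    have h6 : d * (K + 2) * (W + 1) = d * (W + 1) + d + (d * K * (W + 1) + d * W) := by ring
    omega

end OrbitKL

namespace OrbitKL
open Polynomial

theorem one_inst {d L : ℕ} (hL : 0 < L) {c : ℝ} (hc : 1 < c)
    (hk : ∀ P : ℤ[X], P ≠ 0 → P.natDegree ≤ d → |P.leadingCoeff| = 1 →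
      (∃ l ∈ P.aroots ℂ, c ≤ ‖l‖) ∨ (∀ l ∈ P.aroots ℂ, l = 0 ∨ l ^ L = 1))
    (K : ℕ) (hK : 1 / (c - 1) ≤ K)
    (A : Matrix (Fin d) (Fin d) ℤ) (x y : Fin d → ℤ) (D : ℤ) (hD : D ≠ 0) (W : ℕ)
    (h1 : ∀ m ≤ d, |dlt A x D m| ≤ (W : ℤ))
    (h2 : ∀ m ≤ d, ∀ i, |bvec A x y D m i| ≤ (W : ℤ))
    (h3 : ∀ r < d + L, ∀ k < d, ∀ i, |evec A x y D L r k i| ≤ (W : ℤ))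
    (n : ℕ) (hn : (A ^ n).mulVec x = D ^ n • y) :
    ∃ n' ≤ (d * (K + 2) + d + L) * (W + 1), (A ^ n').mulVec x = D ^ n' • y := by
  have hDQ : (D : ℚ) ≠ 0 := by exact_mod_cast hD
  let f := Int.castRingHom ℚ
  have hfinj : Function.Injective f := RingHom.injective_int _
  let M : Matrix (Fin d) (Fin d) ℚ := (D : ℚ)⁻¹ • A.map f
  have hDM : (D : ℚ) • M = A.map f := by
    simp only [M]; rw [smul_smul, mul_inv_cancel₀ hDQ, one_smul]
  have hMn : (M ^ n).mulVec (f ∘ x) = f ∘ y := by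
    simp only [M]
    rw [_root_.smul_pow, Matrix.smul_mulVec, ← Matrix.map_pow, map_mulVec', hn, ← smul_comp', map_pow,
      smul_smul, ← mul_pow, eq_intCast, inv_mul_cancel₀ hDQ, one_pow, one_smul]
  clear_value M
  obtain ⟨p, hp, hpd, hp0, hmin⟩ := minp M (f ∘ x)
  obtain ⟨hδ, hdvd⟩ := core M (f ∘ x) (f ∘ y) D hDQ p hp hpd hp0 hmin n hMn
  have hfD : (D : ℚ) = f D := rfl
  rw [hDM, hfD, dlt_map] at hδ
  rw [hDM, hfD, dlt_map, bvec_map] at hdvd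
  obtain ⟨p0, hprim, hdeg, a, ha, hmap⟩ := prim hp
  by_cases hm0 : p.natDegree = 0
  · have hp1 : p = 1 := hp.natDegree_eq_zero.1 hm0
    rw [hp1, map_one, Matrix.one_mulVec] at hp0
    have hx : x = 0 := by
      ext i; apply hfinj; exact (congrFun hp0 i).trans (map_zero f).symm
    refine ⟨0, Nat.zero_le _, ?_⟩
    rw [hx, Matrix.mulVec_zero] at hn ⊢
    have : y = 0 := by
      rcases smul_eq_zero.1 hn.symm with h | h
      · exact absurd h (pow_ne_zero _ hD)
      · exact h
    rw [this, smul_zero]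
  have hdvd0 : p0 ∣ C (dlt A x D p.natDegree) * X ^ n -
      ∑ i, C (bvec A x y D p.natDegree i) * X ^ (i : ℕ) := by
    rw [IsPrimitive.Int.dvd_iff_map_cast_dvd_map_cast _ _ hprim, hmap]
    have hu : IsUnit (C a) := isUnit_C.2 ha.isUnit
    rw [hu.mul_left_dvd]
    simpa [Polynomial.map_sub, Polynomial.map_sum, f] using hdvd
  rcases case_poly hc hk K hK p0 hprim _ hdeg (Nat.pos_of_ne_zero hm0) hpd _
    (fun h => hδ (by rw [h, map_zero])) _ n W (h1 _ hpd) (h2 _ hpd) hdvd0 with h | h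
  · refine ⟨n, h.trans ?_, hn⟩
    gcongr
    omega
  · have hq1 : p ∣ (X * (X ^ L - 1)) ^ d := by
      refine quasi1 hp hpd fun l hl => h l ?_
      rw [mem_aroots]
      refine ⟨hprim.ne_zero, ?_⟩
      have := congrArg (aeval l) hmap
      rw [map_mul, hl, mul_zero] at this
      rw [← this]
      exact (aeval_map_algebraMap ℚ l p0).symm
    have h0 : ((A ^ L - D ^ L • 1) ^ d).mulVec ((A ^ d).mulVec x) = 0 := by
      obtain ⟨g, hg⟩ := hq1
      have e := congrArg (fun P => (aeval M P).mulVec (f ∘ x)) hg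
      simp only [mul_comm p g] at e
      rw [map_mul, ← Matrix.mulVec_mulVec, hp0, Matrix.mulVec_zero, mul_pow, mul_comm] at e
      simp only [map_mul, map_pow, map_sub, map_one, aeval_X] at e
      have hA : A.map f = (D : ℚ) • M := hDM.symm
      have hN : (A ^ L - D ^ L • 1).map f = (D : ℚ) ^ L • (M ^ L - 1) := by
        rw [Matrix.map_sub _ (map_sub f), Matrix.map_pow, hA, _root_.smul_pow, smul_sub]
        congr 1
        ext i j
        simp only [Matrix.map_apply, Matrix.smul_apply, Matrix.one_apply, smul_eq_mul, map_mul,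
          map_pow, apply_ite f, map_one, map_zero]
        rfl
      ext i
      apply hfinj
      rw [Pi.zero_apply, map_zero, RingHom.map_mulVec]
      have e2 : ((A ^ L - D ^ L • 1) ^ d).map f = ((D : ℚ) ^ L • (M ^ L - 1)) ^ d := by
        rw [Matrix.map_pow, hN]
      rw [e2, ← map_mulVec', Matrix.map_pow, hA, _root_.smul_pow, _root_.smul_pow,
        Matrix.smul_mulVec, Matrix.smul_mulVec, Matrix.mulVec_smul, Matrix.mulVec_mulVec, e,
        smul_zero, smul_zero, Pi.zero_apply]
    obtain ⟨n', hn', he⟩ := quasi2 A x y D hD L hL W h3 h0 n hn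
    refine ⟨n', hn'.trans ?_, he⟩
    have : (d * (K + 2) + d + L) * (W + 1) = d + L + L * W + (d * (K + 2) * (W + 1) + d * W) := by
      ring
    omega

theorem bound (d : ℕ) : ∃ C : ℕ, ∀ (M : Fin d → Fin d → ℤ) (x y : Fin d → ℤ) (D : ℕ), 0 < D →
    ∀ n, ((Matrix.of M) ^ n).mulVec x = (D : ℤ) ^ n • y →
      ∃ n ≤ HH M x y D ^ C, ((Matrix.of M) ^ n).mulVec x = (D : ℤ) ^ n • y := by
  obtain ⟨c, hc, L, hL, hk⟩ := kron d
  obtain ⟨K, hK⟩ := exists_nat_ge (1 / (c - 1))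
  obtain ⟨C, hC⟩ := pb_all d L
  refine ⟨(d * (K + 2) + d + L) + (C + 1), fun M x y D hD n hn => ?_⟩
  obtain ⟨h1, h2, h3⟩ := hC M x y D
  have h2h := two_le_HH M x y D
  set h := HH M x y D
  obtain ⟨n', hn', he⟩ := one_inst hL hc hk K hK (Matrix.of M) x y D (by exact_mod_cast hD.ne') (h ^ C)
    (by simpa using h1) (by simpa using h2) (by simpa using h3) n hn
  refine ⟨n', hn'.trans ?_, he⟩
  rw [pow_add]
  refine Nat.mul_le_mul ?_ ?_
  · exact (Nat.lt_pow_self (by omega)).le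
  · rw [pow_succ]
    have : 1 ≤ h ^ C := Nat.one_le_pow _ _ (by omega)
    nlinarith

end OrbitKL

/-- **Kannan–Lipton Orbit Problem is decidable.**  For each `d ≥ 1`, the predicate
on triples `(M, x, y)` (a rational `d × d` matrix and rational vectors) asking
whether `∃ n, Mⁿx = y` is computable: there is a computable Boolean-valued
function deciding it (this is exactly `ComputablePred`). -/
theorem orbit_problem_decidable (d : ℕ) (hd : 1 ≤ d) :
    ComputablePred fun T : (Fin d → Fin d → ℚ) × (Fin d → ℚ) × (Fin d → ℚ) =>
      ∃ n : ℕ, ((Matrix.of T.1) ^ n).mulVec T.2.1 = T.2.2 := by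
  exact OrbitKL.decidable_of_bound d (OrbitKL.bound d)
end
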